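/- Let (E,𝒞,r) be a semimatroid without loops. Then the sequence w_0(𝒞), w_1(𝒞), …, w_{r(𝒞)}(𝒞) of unsigned Whitney numbers of the first kind is log-concave: w_{k−1}(𝒞) · w_{k+1}(𝒞) ≤ w_k(𝒞)^2 for every 1 ≤ k ≤ r(𝒞) − 1. -/

import Mathlib

/-- A semimatroid on a finite ground set `E`: a nonempty, subset-closed collection `C`
of "central" subsets of `E`, together with a rank function `r` satisfying (SR1)-(SR5). -/
structure Semimatroid (E : Type*) [DecidableEq E] [Fintype E] where
  C : Finset (Finset E)
  r : Finset E → ℕ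
  C_nonempty : C.Nonempty
  mem_of_subset : ∀ ⦃X Y : Finset E⦄, X ∈ C → Y ⊆ X → Y ∈ C
  r_le_card : ∀ ⦃X : Finset E⦄, X ∈ C → r X ≤ X.card
  r_mono : ∀ ⦃X Y : Finset E⦄, X ∈ C → Y ∈ C → X ⊆ Y → r X ≤ r Y
  submodular : ∀ ⦃X Y : Finset E⦄, X ∈ C → Y ∈ C → X ∪ Y ∈ C →
    r (X ∩ Y) + r (X ∪ Y) ≤ r X + r Y
  union_mem : ∀ ⦃X Y : Finset E⦄, X ∈ C → Y ∈ C → r X = r (X ∩ Y) → X ∪ Y ∈ C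
  augment : ∀ ⦃X Y : Finset E⦄, X ∈ C → Y ∈ C → r X < r Y →
    ∃ e ∈ Y \ X, insert e X ∈ C

namespace Semimatroid

variable {E : Type*} [DecidableEq E] [Fintype E] (S : Semimatroid E)

/-- The rank `r(𝒞)` of the semimatroid: the common rank of the maximal central sets. -/
def rank : ℕ := S.C.sup S.r

/-- The closure of a central set `X`:
`cl X = {e ∈ E : X ∪ {e} ∈ 𝒞 and r (X ∪ {e}) = r X}`. -/
def cl (X : Finset E) : Finset E :=
  Finset.univ.filter fun e => insert e X ∈ S.C ∧ S.r (insert e X) = S.r X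

/-- The flats of the semimatroid: central sets `X` with `cl X = X`. -/
def flats : Finset (Finset E) := S.C.filter fun X => S.cl X = X

/-- The characteristic polynomial `χ(𝒞;t) = Σ_{X ∈ 𝒞} (−1)^{|X|} t^{r(𝒞)−r(X)}`. -/
noncomputable def charPoly : Polynomial ℤ :=
  ∑ A ∈ S.C, (-1 : Polynomial ℤ) ^ A.card * Polynomial.X ^ (S.rank - S.r A)

end Semimatroid

namespace Semimatroid

variable {E : Type*} [DecidableEq E] [Fintype E] (S : Semimatroid E)

/-- The `i`-th unsigned Whitney number of the first kind:
`w_i(𝒞) = (−1)^i ⋅ (coefficient of t^{r(𝒞)−i} in χ(𝒞;t))`. -/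
noncomputable def whitney (i : ℕ) : ℤ :=
  (-1 : ℤ) ^ i * S.charPoly.coeff (S.rank - i)

end Semimatroid

/-!
The cone over `S`, whose extra element is a hyperplane at infinity `p`, is a matroid whose flats
through `p` have Möbius numbers adding up, rank by rank, to the Whitney numbers of `S`.

To each interval of flats belongs a volume polynomial, whose partial derivatives are the products of
the volumes of a lower and an upper interval. At strictly concave points it is Lorentzian: its
Hessian has exactly one positive eigenvalue. This is proved by induction on the rank. By Euler's
formula and the symmetry of the third derivative, the Hessian is a positive combination of Hessians
of products of volumes, and the Lorentzian inequalities for the factors give a Bochner-type estimate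
for it; a Cauchy–Schwarz argument turns that estimate into the signature. The induction starts in
rank three, where the Hessian is explicitly one square minus a sum of squares.

At the degenerate point `-1_⊥`, a limit of strictly concave ones, the volumes of the lower intervals
are the unsigned Möbius numbers divided by factorials. The Lorentzian inequality in the direction of
the top flat is then log-concavity in the top degree, and truncating the cone brings any degree
to the top.
-/

section LinearAlgebra

open Matrix

variable {ι : Type*} [Fintype ι]

theorem dotProduct_mulVec_comm_of_isSymm {P : Matrix ι ι ℝ} (hP : P.IsSymm) (x y : ι → ℝ) :
    x ⬝ᵥ P *ᵥ y = y ⬝ᵥ P *ᵥ x := by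
  rw [dotProduct_mulVec, ← mulVec_transpose, hP.eq, dotProduct_comm]

theorem exists_mulVec_eq_of_orthogonal_ker {P : Matrix ι ι ℝ} (hP : P.IsSymm) {z : ι → ℝ}
    (hz : ∀ y, P *ᵥ y = 0 → y ⬝ᵥ z = 0) : ∃ y, P *ᵥ y = z := by
  classical
  have hsymm : P.toEuclideanLin.IsSymmetric :=
    isSymmetric_toEuclideanLin_iff.2 (by rwa [IsHermitian, conjTranspose_eq_transpose_of_trivial])
  have hmem : WithLp.toLp 2 z ∈ LinearMap.range P.toEuclideanLin := by
    rw [← Submodule.orthogonal_orthogonal (LinearMap.range P.toEuclideanLin),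
      hsymm.orthogonal_range, Submodule.mem_orthogonal]
    intro u hu
    rw [EuclideanSpace.inner_eq_star_dotProduct, star_trivial, dotProduct_comm]
    exact hz _ (congrArg WithLp.ofLp (LinearMap.mem_ker.1 hu))
  obtain ⟨y, hy⟩ := hmem
  exact ⟨y.ofLp, congrArg WithLp.ofLp hy⟩

theorem sq_dotProduct_mulVec_le {P : Matrix ι ι ℝ} (hP : P.IsSymm) (h : ∀ x, 0 ≤ x ⬝ᵥ P *ᵥ x)
    (x y : ι → ℝ) : (x ⬝ᵥ P *ᵥ y) ^ 2 ≤ (x ⬝ᵥ P *ᵥ x) * (y ⬝ᵥ P *ᵥ y) := by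
  classical
  have hsymm : LinearMap.IsSymm (toBilin' P) :=
    ⟨by simpa only [toBilin'_apply', RingHom.id_apply] using dotProduct_mulVec_comm_of_isSymm hP⟩
  simpa only [toBilin'_apply'] using LinearMap.BilinForm.apply_sq_le_of_symm (toBilin' P)
    (by simpa only [toBilin'_apply'] using h) hsymm x y

/-- Expanding `P *ᵥ y = d * x` by Cauchy–Schwarz for the semidefinite `P = diagonal d - Q` gives
`(x ⬝ᵥ (d * x)) ^ 2 ≤ (x ⬝ᵥ P *ᵥ x) * (x ⬝ᵥ (d * x))`. -/
theorem dotProduct_mulVec_nonpos_of_orthogonal_ker [DecidableEq ι] {Q : Matrix ι ι ℝ}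
    (hQ : Q.IsSymm) {d : ι → ℝ} (hd : ∀ a, 0 < d a) (hpsd : ∀ y, 0 ≤ y ⬝ᵥ (diagonal d - Q) *ᵥ y)
    (hbochner : ∀ y, y ⬝ᵥ Q *ᵥ y ≤ ∑ a, (Q *ᵥ y) a ^ 2 / d a) {x : ι → ℝ}
    (hx : ∀ y, (diagonal d - Q) *ᵥ y = 0 → y ⬝ᵥ (d * x) = 0) : x ⬝ᵥ Q *ᵥ x ≤ 0 := by
  have hP : (diagonal d - Q).IsSymm := (isSymm_diagonal d).sub hQ
  have expand (u v : ι → ℝ) : u ⬝ᵥ (diagonal d - Q) *ᵥ v = u ⬝ᵥ (d * v) - u ⬝ᵥ Q *ᵥ v := by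
    have hdiag : diagonal d *ᵥ v = d * v := funext (mulVec_diagonal d v)
    rw [sub_mulVec, dotProduct_sub, hdiag]
  obtain ⟨y, hy⟩ := exists_mulVec_eq_of_orthogonal_ker hP hx
  have hyPy : y ⬝ᵥ (diagonal d - Q) *ᵥ y ≤ x ⬝ᵥ (d * x) := by
    have hQy (a : ι) : (Q *ᵥ y) a = d a * (y a - x a) := by
      have := congrFun hy a
      simp only [sub_mulVec, Pi.sub_apply, mulVec_diagonal, Pi.mul_apply] at this
      linarith
    have hsum : ∑ a, (Q *ᵥ y) a ^ 2 / d a = ∑ a, (y a * (Q *ᵥ y) a - y a * (d a * x a)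
        + x a * (d a * x a)) := Finset.sum_congr rfl fun a _ ↦ by
      rw [hQy]; have := (hd a).ne'; field_simp; ring
    have := hbochner y
    rw [hsum, Finset.sum_add_distrib, Finset.sum_sub_distrib] at this
    rw [hy]
    simp only [dotProduct, Pi.mul_apply] at this ⊢
    linarith
  have hcs := sq_dotProduct_mulVec_le hP hpsd x y
  have hnonneg := hpsd x
  rw [hy] at hyPy hcs
  have hle : (x ⬝ᵥ (d * x)) ^ 2 ≤ (x ⬝ᵥ (diagonal d - Q) *ᵥ x) * (x ⬝ᵥ (d * x)) :=
    hcs.trans (mul_le_mul_of_nonneg_left hyPy hnonneg)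
  rw [expand] at hle hnonneg
  nlinarith

theorem two_mul_dotProduct_diagonal_sub_mulVec [DecidableEq ι] {Q : Matrix ι ι ℝ}
    (hQ : Q.IsSymm) {l : ι → ℝ} (hl : ∀ a, l a ≠ 0) (y : ι → ℝ) :
    2 * y ⬝ᵥ (diagonal (fun a ↦ (Q *ᵥ l) a / l a) - Q) *ᵥ y =
      ∑ a, ∑ b, Q a b * l a * l b * (y a / l a - y b / l b) ^ 2 := by
  have hdiag : y ⬝ᵥ diagonal (fun a ↦ (Q *ᵥ l) a / l a) *ᵥ y =
      ∑ a, ∑ b, Q a b * l b * (y a ^ 2 / l a) := by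
    refine Finset.sum_congr rfl fun a _ ↦ ?_
    rw [mulVec_diagonal, ← Finset.sum_mul]
    exact show _ = (Q *ᵥ l) a * _ by ring
  have hdiag' : ∑ a, ∑ b, Q a b * l b * (y a ^ 2 / l a) =
      ∑ a, ∑ b, Q a b * l a * (y b ^ 2 / l b) := by
    rw [Finset.sum_comm]
    exact Finset.sum_congr rfl fun a _ ↦ Finset.sum_congr rfl fun b _ ↦ by rw [hQ.apply]
  have hoff : y ⬝ᵥ Q *ᵥ y = ∑ a, ∑ b, Q a b * y a * y b := by
    simp only [dotProduct, mulVec, Finset.mul_sum]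
    exact Finset.sum_congr rfl fun a _ ↦ Finset.sum_congr rfl fun b _ ↦ by ring
  rw [sub_mulVec, dotProduct_sub, two_mul, sub_add_sub_comm, hdiag]
  nth_rw 2 [hdiag']
  simp only [hoff, ← Finset.sum_add_distrib, ← Finset.sum_sub_distrib]
  refine Finset.sum_congr rfl fun a _ ↦ Finset.sum_congr rfl fun b _ ↦ ?_
  have := hl a
  have := hl b
  field_simp
  ring

theorem dotProduct_mulVec_nonpos_of_bochner {Q : Matrix ι ι ℝ} (hQ : Q.IsSymm)
    (hoff : ∀ a b, a ≠ b → 0 ≤ Q a b)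
    (hconn : ∀ a b, Relation.EqvGen (fun a b ↦ 0 < Q a b) a b)
    {l : ι → ℝ} (hl : ∀ a, 0 < l a) (hQl : ∀ a, 0 < (Q *ᵥ l) a)
    (hbochner : ∀ y, y ⬝ᵥ Q *ᵥ y ≤ ∑ a, l a * (Q *ᵥ y) a ^ 2 / (Q *ᵥ l) a)
    {x : ι → ℝ} (hx : x ⬝ᵥ Q *ᵥ l = 0) : x ⬝ᵥ Q *ᵥ x ≤ 0 := by
  classical
  have dirichlet := two_mul_dotProduct_diagonal_sub_mulVec hQ fun a ↦ (hl a).ne'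
  have term_nonneg (y : ι → ℝ) (a b : ι) :
      0 ≤ Q a b * l a * l b * (y a / l a - y b / l b) ^ 2 := by
    rcases eq_or_ne a b with rfl | hab
    · simp
    · have := hoff a b hab; have := hl a; have := hl b; positivity
  refine dotProduct_mulVec_nonpos_of_orthogonal_ker hQ (d := fun a ↦ (Q *ᵥ l) a / l a)
    (fun a ↦ div_pos (hQl a) (hl a)) (fun y ↦ ?_) (fun y ↦ (hbochner y).trans_eq ?_) fun y hy ↦ ?_
  · have := Finset.sum_nonneg fun a (_ : a ∈ Finset.univ) ↦
      Finset.sum_nonneg fun b (_ : b ∈ Finset.univ) ↦ term_nonneg y a b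
    linarith [dirichlet y]
  · refine Finset.sum_congr rfl fun a _ ↦ ?_
    have := (hl a).ne'; have := (hQl a).ne'
    field_simp
  · have hterm (a b : ι) : Q a b * l a * l b * (y a / l a - y b / l b) ^ 2 = 0 := by
      have hzero := (dirichlet y).symm
      rw [hy, dotProduct_zero, mul_zero, Fintype.sum_eq_zero_iff_of_nonneg
        fun a ↦ Finset.sum_nonneg fun b _ ↦ term_nonneg y a b] at hzero
      exact congrFun ((Fintype.sum_eq_zero_iff_of_nonneg (term_nonneg y a)).1
        (congrFun hzero a)) b
    have hratio (a b : ι) : y a / l a = y b / l b := by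
      refine congrArg (Quot.lift (fun a ↦ y a / l a) fun a b hab ↦ ?_)
        (Quot.eqvGen_sound (hconn a b))
      have hweight : Q a b * l a * l b ≠ 0 := (mul_pos (mul_pos hab (hl a)) (hl b)).ne'
      exact sub_eq_zero.1 (pow_eq_zero_iff two_ne_zero |>.1 <|
        (mul_eq_zero.1 (hterm a b)).resolve_left hweight)
    rcases isEmpty_or_nonempty ι with _ | ⟨⟨a₀⟩⟩
    · simp
    · calc y ⬝ᵥ ((fun a ↦ (Q *ᵥ l) a / l a) * x)
          = ∑ a, y a₀ / l a₀ * (x a * (Q *ᵥ l) a) := Finset.sum_congr rfl fun a _ ↦ by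
            rw [hratio a₀ a, Pi.mul_apply]; ring
        _ = 0 := by rw [← Finset.mul_sum]; exact mul_eq_zero_of_right _ hx

end LinearAlgebra

theorem apply_mul_apply_le_sq_of_neg_on_ker {W : Type*} [AddCommGroup W] [Module ℝ W]
    {B : LinearMap.BilinForm ℝ W} (hB : B.IsSymm) {φ : W →ₗ[ℝ] ℝ}
    (hneg : ∀ x, φ x = 0 → B x x ≤ 0) {l : W} (hl : 0 < B l l) (x : W) :
    B x x * B l l ≤ B x l ^ 2 := by
  have hφl : φ l ≠ 0 := fun h ↦ (hneg l h).not_gt hl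
  have h := hneg (x - (φ x / φ l) • l) (by simp [hφl])
  have hsymm : B l x = B x l := hB.eq x l |>.symm
  simp only [map_sub, map_smul, LinearMap.sub_apply, LinearMap.smul_apply, smul_eq_mul,
    hsymm] at h
  nlinarith [sq_nonneg (B x l - φ x / φ l * B l l)]

theorem product_rule_mul_le_sq {m n f g f' g' f'' g'' : ℝ} (hm : 0 ≤ m) (hn : 0 ≤ n)
    (hf : f'' * (m * f) ≤ (m - 1) * f' ^ 2) (hg : g'' * (n * g) ≤ (n - 1) * g' ^ 2)
    (hm0 : m = 0 → f' = 0 ∧ f'' = 0) (hn0 : n = 0 → g' = 0 ∧ g'' = 0) :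
    (f'' * g + 2 * (f' * g') + f * g'') * ((m + n) * (f * g)) ≤
      (m + n - 1) * (f' * g + f * g') ^ 2 := by
  rcases hm.eq_or_lt with h | hm
  · obtain ⟨rfl, rfl⟩ := hm0 h.symm
    subst h
    nlinarith [mul_le_mul_of_nonneg_left hg (sq_nonneg f)]
  rcases hn.eq_or_lt with h | hn
  · obtain ⟨rfl, rfl⟩ := hn0 h.symm
    subst h
    nlinarith [mul_le_mul_of_nonneg_left hf (sq_nonneg g)]
  have hf' := mul_le_mul_of_nonneg_left hf (by positivity : 0 ≤ g ^ 2 * n * (m + n))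
  have hg' := mul_le_mul_of_nonneg_left hg (by positivity : 0 ≤ f ^ 2 * m * (m + n))
  refine le_of_mul_le_mul_left ?_ (mul_pos hm hn)
  nlinarith [sq_nonneg (n * (f' * g) - m * (f * g'))]

open Finset in
theorem sum_neg_one_pow_card_mul_insert {α : Type*} [DecidableEq α] [Fintype α] (i : α)
    (f : Finset α → ℝ) : ∑ X : Finset α, (-1) ^ #X * f (insert i X) = 0 := by
  have huniv : (univ : Finset (Finset α)) = (insert i (univ.erase i)).powerset := by
    rw [insert_erase (mem_univ i), powerset_univ]
  rw [huniv, sum_powerset_insert (notMem_erase i _), ← sum_add_distrib]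
  refine sum_eq_zero fun X hX ↦ ?_
  have hi : i ∉ X := fun h ↦ notMem_erase i _ (mem_powerset.1 hX h)
  rw [card_insert_of_notMem hi, insert_idem, pow_succ]
  ring

/-! ### Calculus on graded families of flats -/

/-- A graded family of finite sets in which every element outside a member `A` lies in exactly one
cover of `A`: this is what the argument uses about the flats of a matroid. -/
structure FlatFamily (α : Type*) where
  flats : Finset (Finset α)
  rk : flats → ℕ
  rk_strictMono : StrictMono rk
  exists_cover : ∀ ⦃A B : flats⦄, A < B → ∀ ⦃i⦄, i ∈ B.1 → i ∉ A.1 →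
    ∃ G, A < G ∧ G ≤ B ∧ i ∈ G.1 ∧ rk G = rk A + 1
  cover_unique : ∀ ⦃A G H : flats⦄, A < G → A < H → rk G = rk A + 1 → rk H = rk A + 1 →
    ∀ ⦃i⦄, i ∈ G.1 → i ∈ H.1 → i ∉ A.1 → G = H

namespace FlatFamily

open Finset Matrix TrivSqZeroExt

variable {α : Type*} (F : FlatFamily α)

/-- The members of the family, ordered by inclusion. -/
abbrev Flat : Type _ := F.flats

variable {F} {A B G H K : F.Flat}

/-- The position of `#G` between `#A` and `#B`, on a scale from `0` to `1`. -/
noncomputable def relCard (A B G : F.Flat) : ℝ := (#G.1 - #A.1) / (#B.1 - #A.1)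

theorem card_lt_card_of_lt (h : A < B) : (#A.1 : ℝ) < #B.1 := mod_cast Finset.card_lt_card h

@[simp] theorem relCard_left (A B : F.Flat) : relCard A B A = 0 := by simp [relCard]

theorem relCard_right (h : A < B) : relCard A B B = 1 :=
  div_self (sub_ne_zero.2 (card_lt_card_of_lt h).ne')

/-- A function on flats, modified by an affine function of the cardinality so as to vanish at `A`
and `B`. -/
noncomputable def normalize (A B : F.Flat) : (F.Flat → ℝ) →ₗ[ℝ] F.Flat → ℝ where
  toFun x G := x G - x A - (x B - x A) * relCard A B G
  map_add' x y := by ext; simp only [Pi.add_apply]; ring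
  map_smul' c x := by ext; simp only [Pi.smul_apply, smul_eq_mul, RingHom.id_apply]; ring

theorem normalize_apply (x : F.Flat → ℝ) :
    normalize A B x G = x G - x A - (x B - x A) * relCard A B G := rfl

@[simp] theorem normalize_left (x : F.Flat → ℝ) : normalize A B x A = 0 := by
  simp [normalize_apply]

theorem normalize_right (h : A < B) (x : F.Flat → ℝ) : normalize A B x B = 0 := by
  simp [normalize_apply, relCard_right h]

theorem normalize_apply_of_eq_zero {x : F.Flat → ℝ} (hA : x A = 0) (hB : x B = 0) :
    normalize A B x G = x G := by
  simp [normalize_apply, hA, hB]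

theorem normalize_normalize (h : G < H) (x : F.Flat → ℝ) :
    normalize G H (normalize A B x) = normalize G H x := by
  have hGH : (#H.1 : ℝ) - #G.1 ≠ 0 := sub_ne_zero.2 (card_lt_card_of_lt h).ne'
  ext K
  simp only [normalize_apply, relCard]
  field_simp
  ring

theorem continuous_normalize (A B G : F.Flat) :
    Continuous fun l : F.Flat → ℝ ↦ normalize A B l G := by
  simp only [normalize_apply]
  fun_prop

theorem normalize_sq_card (hAB : A < B) (G : F.Flat) :
    normalize A B (fun G ↦ (#G.1 : ℝ) ^ 2) G = -((#G.1 - #A.1) * (#B.1 - #G.1)) := by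
  have hne : (#B.1 : ℝ) - #A.1 ≠ 0 := sub_ne_zero.2 (card_lt_card_of_lt hAB).ne'
  rw [normalize_apply, relCard]
  field_simp
  ring

variable [DecidableEq α]

theorem filter_lt_Ioo (hG : G ∈ Ioo A B) : {H ∈ Ioo A B | H < G} = Ioo A G := by
  ext H
  simp only [mem_filter, mem_Ioo] at hG ⊢
  exact ⟨fun h ↦ ⟨h.1.1, h.2⟩, fun h ↦ ⟨⟨h.1, h.2.trans hG.2⟩, h.2⟩⟩

theorem filter_gt_Ioo (hG : G ∈ Ioo A B) : {H ∈ Ioo A B | G < H} = Ioo G B := by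
  ext H
  simp only [mem_filter, mem_Ioo] at hG ⊢
  exact ⟨fun h ↦ ⟨h.2, h.1.2⟩, fun h ↦ ⟨⟨hG.1.trans h.1, h.2⟩, h.1⟩⟩

section Derivatives

variable {R : Type*} [CommRing R] [Algebra ℝ R] (V : F.Flat → F.Flat → R)

/-- The derivative of `V A B` in the direction `x`, for a family `V` whose partial derivative at `G`
is `V A G * V G B`. -/
noncomputable def deriv (A B : F.Flat) : (F.Flat → ℝ) →ₗ[ℝ] R :=
  ∑ G ∈ Ioo A B, (LinearMap.proj G ∘ₗ normalize A B).smulRight (V A G * V G B)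

/-- The derivative of the product `V A G * V G B`, by the Leibniz rule. -/
noncomputable def derivWeight (A B G : F.Flat) : (F.Flat → ℝ) →ₗ[ℝ] R :=
  LinearMap.mulRight ℝ (V G B) ∘ₗ deriv V A G + LinearMap.mulLeft ℝ (V A G) ∘ₗ deriv V G B

/-- The second derivative of `V A B`. -/
noncomputable def deriv2 (A B : F.Flat) : (F.Flat → ℝ) →ₗ[ℝ] (F.Flat → ℝ) →ₗ[ℝ] R :=
  ∑ G ∈ Ioo A B, (LinearMap.proj G ∘ₗ normalize A B).smulRight (derivWeight V A B G)

/-- The second derivative of the product `V A G * V G B`. -/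
noncomputable def deriv2Weight (A B G : F.Flat) (x y : F.Flat → ℝ) : R :=
  deriv2 V A G x y * V G B + deriv V A G x * deriv V G B y +
    (deriv V A G y * deriv V G B x + V A G * deriv2 V G B x y)

theorem deriv_apply (x : F.Flat → ℝ) :
    deriv V A B x = ∑ G ∈ Ioo A B, normalize A B x G • (V A G * V G B) := by
  simp [deriv]

theorem derivWeight_apply (x : F.Flat → ℝ) :
    derivWeight V A B G x = deriv V A G x * V G B + V A G * deriv V G B x := rfl

theorem deriv2_apply (x y : F.Flat → ℝ) :
    deriv2 V A B x y = ∑ G ∈ Ioo A B, normalize A B x G • derivWeight V A B G y := by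
  simp [deriv2]

theorem deriv_normalize (x : F.Flat → ℝ) : deriv V G H (normalize A B x) = deriv V G H x := by
  rw [deriv_apply, deriv_apply]
  refine sum_congr rfl fun K hK ↦ ?_
  rw [normalize_normalize ((mem_Ioo.1 hK).1.trans (mem_Ioo.1 hK).2)]

theorem derivWeight_normalize (x : F.Flat → ℝ) :
    derivWeight V G H K (normalize A B x) = derivWeight V G H K x := by
  simp only [derivWeight_apply, deriv_normalize]

/-- The coefficients of `deriv2` with respect to normalized functions. -/
noncomputable def hessian (A B G H : F.Flat) : R :=
  (if H < G then V A H * V H G * V G B else 0) + (if G < H then V A G * V G H * V H B else 0) -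
    if G = H then (∑ K ∈ Ioo A G, relCard A G K • (V A K * V K G)) * V G B +
      V A G * ∑ K ∈ Ioo G B, (1 - relCard G B K) • (V G K * V K B) else 0

theorem hessian_comm (A B G H : F.Flat) : hessian V A B G H = hessian V A B H G := by
  rcases eq_or_ne G H with rfl | h
  · rfl
  · simp only [hessian, h, h.symm, if_false, add_comm]

theorem derivWeight_eq_sum_hessian (hG : G ∈ Ioo A B) (y : F.Flat → ℝ) :
    derivWeight V A B G y = ∑ H ∈ Ioo A B, normalize A B y H • hessian V A B G H := by
  obtain ⟨hAG, hGB⟩ := mem_Ioo.1 hG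
  have hAB := hAG.trans hGB
  have hl (H : F.Flat) : normalize A G y H =
      normalize A B y H - normalize A B y G * relCard A G H := by
    rw [← normalize_normalize (A := A) (B := B) hAG, normalize_apply, normalize_left]; ring
  have hr (H : F.Flat) : normalize G B y H =
      normalize A B y H - normalize A B y G * (1 - relCard G B H) := by
    rw [← normalize_normalize (A := A) (B := B) hGB, normalize_apply, normalize_right hAB]; ring
  simp only [hessian, smul_sub, smul_add, sum_sub_distrib, sum_add_distrib, smul_ite, smul_zero]
  rw [sum_ite_eq, if_pos hG, ← sum_filter, ← sum_filter, filter_lt_Ioo hG, filter_gt_Ioo hG,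
    derivWeight_apply, deriv_apply, deriv_apply]
  simp only [hl, hr, sub_smul, mul_smul, sum_sub_distrib, ← smul_sum, sub_mul, mul_sub, sum_mul,
    mul_sum, smul_mul_assoc, mul_smul_comm, mul_assoc]
  rw [smul_sub]
  abel

theorem deriv2_eq_sum_hessian (x y : F.Flat → ℝ) : deriv2 V A B x y =
    ∑ G ∈ Ioo A B, ∑ H ∈ Ioo A B,
      (normalize A B x G * normalize A B y H) • hessian V A B G H := by
  rw [deriv2_apply]
  refine sum_congr rfl fun G hG ↦ ?_
  simp only [derivWeight_eq_sum_hessian V hG, smul_sum, mul_smul]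

theorem deriv2_comm (x y : F.Flat → ℝ) : deriv2 V A B x y = deriv2 V A B y x := by
  rw [deriv2_eq_sum_hessian, sum_comm, deriv2_eq_sum_hessian]
  simp only [hessian_comm V A B, mul_comm]

theorem deriv2Weight_comm (x y : F.Flat → ℝ) :
    deriv2Weight V A B G x y = deriv2Weight V A B G y x := by
  rw [deriv2Weight, deriv2_comm, deriv2_comm V (A := G) x y, deriv2Weight]
  ring

/-- `V` together with its derivative in the direction `z`: an identity for `tangent V z` over the
dual numbers differentiates the corresponding identity for `V`. -/
noncomputable def tangent (z : F.Flat → ℝ) (A B : F.Flat) : DualNumber R :=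
  inl (V A B) + inr (deriv V A B z)

theorem deriv_tangent (x z : F.Flat → ℝ) :
    deriv (tangent V z) A B x = inl (deriv V A B x) + inr (deriv2 V A B x z) := by
  ext
  · simp [deriv_apply, tangent, fst_sum]
  · simp only [deriv_apply, deriv2_apply, derivWeight_apply, tangent, snd_sum, snd_smul, snd_mul,
      fst_add, snd_add, fst_inl, snd_inl, fst_inr, snd_inr, smul_eq_mul,
      MulOpposite.smul_eq_mul_unop, MulOpposite.unop_op, add_zero, zero_add, smul_add, mul_comm]
    exact sum_congr rfl fun _ _ ↦ add_comm _ _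

theorem snd_derivWeight_tangent (y z : F.Flat → ℝ) :
    (derivWeight (tangent V z) A B G y).snd = deriv2Weight V A B G y z := by
  simp only [derivWeight_apply, deriv2Weight, deriv_tangent, tangent, snd_add, snd_mul, fst_add,
    fst_inl, fst_inr, snd_inl, snd_inr, smul_eq_mul, add_zero, zero_add,
    MulOpposite.smul_eq_mul_unop, MulOpposite.unop_op]
  ring

theorem sum_deriv2Weight_left_comm (x y z : F.Flat → ℝ) :
    ∑ G ∈ Ioo A B, normalize A B x G • deriv2Weight V A B G y z =
      ∑ G ∈ Ioo A B, normalize A B y G • deriv2Weight V A B G x z := by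
  have h := congrArg TrivSqZeroExt.snd (deriv2_comm (tangent V z) (A := A) (B := B) x y)
  simpa only [deriv2_apply, snd_sum, snd_smul, snd_derivWeight_tangent] using h

end Derivatives

/-! ### Balanced weights -/

/-- The weight `w` on the flats strictly between `A` and `B` gives the same total weight to the
flats through every element of `B \ A`. -/
def IsBalanced (A B : F.Flat) (w : F.Flat → ℝ) : Prop :=
  ∀ ⦃i⦄, i ∈ B.1 → i ∉ A.1 → ∀ ⦃j⦄, j ∈ B.1 → j ∉ A.1 →
    ∑ G ∈ Ioo A B with i ∈ G.1, w G = ∑ G ∈ Ioo A B with j ∈ G.1, w G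

theorem IsBalanced.sum_filter_mem {w : F.Flat → ℝ} (hw : IsBalanced A B w) {i : α} (hB : i ∈ B.1)
    (hA : i ∉ A.1) :
    ∑ G ∈ Ioo A B with i ∈ G.1, w G = ∑ G ∈ Ioo A B, relCard A B G * w G := by
  rcases (Ioo A B).eq_empty_or_nonempty with h | ⟨G, hG⟩
  · simp [h]
  have hAB : A < B := (mem_Ioo.1 hG).1.trans (mem_Ioo.1 hG).2
  have hcard : (#B.1 - #A.1 : ℝ) ≠ 0 := sub_ne_zero.2 (card_lt_card_of_lt hAB).ne'
  have hcount (G : F.Flat) (hG : G ∈ Ioo A B) :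
      ∑ j ∈ B.1 \ A.1, (if j ∈ G.1 then w G else 0) = (#G.1 - #A.1) * w G := by
    obtain ⟨hAG, hGB⟩ := mem_Ioo.1 hG
    rw [← sum_filter, sum_const, nsmul_eq_mul, ← cast_card_sdiff hAG.le]
    congr 3
    ext j
    simp only [mem_filter, mem_sdiff]
    exact ⟨fun h ↦ ⟨h.2, h.1.2⟩, fun h ↦ ⟨⟨hGB.le h.1, h.2⟩, h.1⟩⟩
  have hsum : (#B.1 - #A.1 : ℝ) * ∑ G ∈ Ioo A B with i ∈ G.1, w G =
      ∑ G ∈ Ioo A B, (#G.1 - #A.1) * w G := by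
    rw [← sum_congr rfl hcount, sum_comm, ← cast_card_sdiff hAB.le, ← nsmul_eq_mul, ← sum_const]
    refine sum_congr rfl fun j hj ↦ ?_
    rw [← sum_filter]
    exact hw hB hA (mem_sdiff.1 hj).1 (mem_sdiff.1 hj).2
  simp only [relCard, div_mul_eq_mul_div, ← sum_div]
  rw [← hsum, mul_div_cancel_left₀ _ hcard]

theorem IsBalanced.sum_normalize_mul {w : F.Flat → ℝ} (hw : IsBalanced A B w) {i : α}
    (hB : i ∈ B.1) (hA : i ∉ A.1) (x : F.Flat → ℝ) :
    ∑ G ∈ Ioo A B, normalize A B x G * w G =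
      ∑ G ∈ Ioo A B, (x G - x A - if i ∈ G.1 then x B - x A else 0) * w G := by
  simp only [normalize_apply, sub_mul (_ - _), sum_sub_distrib, mul_assoc, ← mul_sum,
    ← hw.sum_filter_mem hB hA, ite_mul, zero_mul, ← sum_filter]

theorem sum_Ioo_Ioo_comm {M : Type*} [AddCommMonoid M] (A B : F.Flat) (f : F.Flat → F.Flat → M) :
    ∑ G ∈ Ioo A B, ∑ H ∈ Ioo A G, f H G = ∑ H ∈ Ioo A B, ∑ G ∈ Ioo H B, f H G := by
  refine sum_comm' fun G H ↦ ?_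
  simp only [mem_Ioo]
  exact ⟨fun h ↦ ⟨⟨h.2.2, h.1.2⟩, h.2.1, h.2.2.trans h.1.2⟩,
    fun h ↦ ⟨⟨h.2.1.trans h.1.1, h.1.2⟩, h.2.1, h.1.1⟩⟩

variable {V : F.Flat → F.Flat → ℝ}

theorem IsBalanced.sum_ite_mem_sub_mul {w : F.Flat → ℝ} (hw : IsBalanced A B w) {i : α}
    (hB : i ∈ B.1) :
    ∑ G ∈ Ioo A B, ((if i ∈ G.1 then 1 else 0) - if i ∈ A.1 then 1 - relCard A B G else 0) * w G =
      ∑ G ∈ Ioo A B, relCard A B G * w G := by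
  split_ifs with hA
  · refine sum_congr rfl fun G hG ↦ ?_
    rw [if_pos ((mem_Ioo.1 hG).1.le hA), sub_sub_cancel]
  · simp only [sub_zero, ite_mul, one_mul, zero_mul, ← sum_filter, hw.sum_filter_mem hB hA]

theorem IsBalanced.ite_mem_deriv (hw : IsBalanced A B fun G ↦ V A G * V G B) {y : F.Flat → ℝ}
    (hyA : y A = 0) {i : α} (hA : i ∉ A.1) :
    (if i ∈ B.1 then deriv V A B y else 0) = ∑ G ∈ Ioo A B,
      ((if i ∈ B.1 then y G else 0) - if i ∈ G.1 then y B else 0) * (V A G * V G B) := by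
  split_ifs with hB
  · simp only [deriv_apply, smul_eq_mul, hw.sum_normalize_mul hB hA, hyA, sub_zero]
  · refine (sum_eq_zero fun G hG ↦ ?_).symm
    rw [if_neg fun h ↦ hB ((mem_Ioo.1 hG).2.le h), sub_zero, zero_mul]

theorem sum_mem_derivWeight_of_isBalanced
    (hleft : ∀ G ∈ Ioo A B, IsBalanced A G fun H ↦ V A H * V H G)
    (hright : ∀ G ∈ Ioo A B, IsBalanced G B fun H ↦ V G H * V H B)
    {y : F.Flat → ℝ} (hyA : y A = 0) (hyB : y B = 0) {i : α} (hB : i ∈ B.1) (hA : i ∉ A.1) :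
    ∑ G ∈ Ioo A B with i ∈ G.1, derivWeight V A B G y =
      ∑ H ∈ Ioo A B, y H * V A H * ∑ G ∈ Ioo H B, relCard H B G * (V H G * V G B) := by
  have upper (H : F.Flat) :
      (if i ∈ H.1 then V A H * deriv V H B y else 0) = ∑ G ∈ Ioo H B,
        (if i ∈ H.1 then y G - y H * (1 - relCard H B G) else 0) * (V A H * V H G * V G B) := by
    split_ifs with hi
    · rw [deriv_apply, mul_sum]
      refine sum_congr rfl fun G _ ↦ ?_
      rw [normalize_apply, hyB, smul_eq_mul]
      ring
    · simp
  have split (G : F.Flat) (hG : G ∈ Ioo A B) :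
      (if i ∈ G.1 then derivWeight V A B G y else 0) =
        ∑ H ∈ Ioo A G, ((if i ∈ G.1 then y H else 0) - if i ∈ H.1 then y G else 0) *
            (V A H * V H G) * V G B +
          if i ∈ G.1 then V A G * deriv V G B y else 0 := by
    rw [← sum_mul, ← (hleft G hG).ite_mem_deriv hyA hA]
    split_ifs <;> simp [derivWeight_apply]
  rw [sum_filter, sum_congr rfl split, sum_add_distrib, sum_Ioo_Ioo_comm, ← sum_add_distrib]
  refine sum_congr rfl fun H hH ↦ ?_
  rw [upper, ← sum_add_distrib, ← (hright H hH).sum_ite_mem_sub_mul hB, mul_sum]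
  refine sum_congr rfl fun G _ ↦ ?_
  split_ifs <;> ring

theorem isBalanced_derivWeight (hleft : ∀ G ∈ Ioo A B, IsBalanced A G fun H ↦ V A H * V H G)
    (hright : ∀ G ∈ Ioo A B, IsBalanced G B fun H ↦ V G H * V H B) (y : F.Flat → ℝ) :
    IsBalanced A B fun G ↦ derivWeight V A B G y := by
  intro i hiB hiA j hjB hjA
  rcases (Ioo A B).eq_empty_or_nonempty with h | ⟨G, hG⟩
  · simp [h]
  have hAB : A < B := (mem_Ioo.1 hG).1.trans (mem_Ioo.1 hG).2
  have hsum {i : α} := sum_mem_derivWeight_of_isBalanced (i := i) hleft hright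
    (normalize_left y) (normalize_right hAB y)
  simp only [← derivWeight_normalize (A := A) (B := B) V y, hsum hiB hiA, hsum hjB hjA]

/-! ### Volume polynomials -/

theorem rk_lt_of_mem_Ioo (hG : G ∈ Ioo A B) : F.rk A < F.rk G ∧ F.rk G < F.rk B :=
  ⟨F.rk_strictMono (mem_Ioo.1 hG).1, F.rk_strictMono (mem_Ioo.1 hG).2⟩

theorem Ioo_eq_empty_of_rk_le (h : F.rk B ≤ F.rk A + 1) : Ioo A B = ∅ := by
  refine eq_empty_of_forall_notMem fun G hG ↦ ?_
  have := rk_lt_of_mem_Ioo hG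
  omega

/-- The volume polynomial of the interval from `A` to `B`, a homogeneous function of `l` of degree
`rk B - rk A - 1`; it is determined by Euler's formula, its partial derivative at `G` being the
product of the volumes of the intervals below and above `G`. -/
noncomputable def vol (l : F.Flat → ℝ) (A B : F.Flat) : ℝ :=
  if F.rk B ≤ F.rk A + 1 then 1
  else (∑ G : Ioo A B, normalize A B l G * (vol l A G * vol l G B)) / (F.rk B - F.rk A - 1)
termination_by F.rk B - F.rk A
decreasing_by
  all_goals
    have := rk_lt_of_mem_Ioo G.2
    omega

theorem vol_of_rk_le (l : F.Flat → ℝ) (h : F.rk B ≤ F.rk A + 1) : vol l A B = 1 := by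
  rw [vol, if_pos h]

theorem deriv_vol_self (l : F.Flat → ℝ) (h : A < B) :
    deriv (vol l) A B l = (F.rk B - F.rk A - 1) * vol l A B := by
  have hrk := F.rk_strictMono h
  rcases le_or_gt (F.rk B) (F.rk A + 1) with hle | hlt
  · have : F.rk B = F.rk A + 1 := by omega
    simp [deriv_apply, Ioo_eq_empty_of_rk_le hle, this]
  · have hgap : (F.rk B - F.rk A - 1 : ℝ) ≠ 0 := by
      have : (F.rk A + 1 : ℝ) < F.rk B := mod_cast hlt
      linarith
    rw [vol, if_neg hlt.not_ge, mul_div_cancel₀ _ hgap, deriv_apply, ← sum_coe_sort]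
    rfl

theorem derivWeight_vol_self (l : F.Flat → ℝ) (hG : G ∈ Ioo A B) :
    derivWeight (vol l) A B G l = (F.rk B - F.rk A - 2) * (vol l A G * vol l G B) := by
  rw [derivWeight_apply, deriv_vol_self l (mem_Ioo.1 hG).1, deriv_vol_self l (mem_Ioo.1 hG).2]
  ring

theorem deriv2_vol_self (l x : F.Flat → ℝ) :
    deriv2 (vol l) A B x l = (F.rk B - F.rk A - 2) * deriv (vol l) A B x := by
  rw [deriv2_apply, deriv_apply, mul_sum]
  refine sum_congr rfl fun G hG ↦ ?_
  rw [derivWeight_vol_self l hG, smul_eq_mul, smul_eq_mul, mul_left_comm]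

theorem deriv2Weight_vol_self (l x : F.Flat → ℝ) (hG : G ∈ Ioo A B) :
    deriv2Weight (vol l) A B G x l = (F.rk B - F.rk A - 3) * derivWeight (vol l) A B G x := by
  rw [deriv2Weight, deriv2_vol_self, deriv2_vol_self, deriv_vol_self l (mem_Ioo.1 hG).1,
    deriv_vol_self l (mem_Ioo.1 hG).2, derivWeight_apply]
  ring

/-- The second derivative is computed through the third one, which is symmetric. -/
theorem rk_mul_deriv2_vol (l x y : F.Flat → ℝ) :
    (F.rk B - F.rk A - 3) * deriv2 (vol l) A B x y =
      ∑ G ∈ Ioo A B, normalize A B l G * deriv2Weight (vol l) A B G x y := by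
  calc (F.rk B - F.rk A - 3) * deriv2 (vol l) A B x y
      = ∑ G ∈ Ioo A B, normalize A B x G • deriv2Weight (vol l) A B G l y := by
        rw [deriv2_apply, mul_sum]
        refine sum_congr rfl fun G hG ↦ ?_
        rw [deriv2Weight_comm, deriv2Weight_vol_self l y hG, smul_eq_mul, smul_eq_mul,
          mul_left_comm]
    _ = ∑ G ∈ Ioo A B, normalize A B l G * deriv2Weight (vol l) A B G x y :=
        sum_deriv2Weight_left_comm _ _ _ _

theorem exists_filter_mem_eq_singleton (hrk : F.rk B = F.rk A + 2) (hAB : A < B) {i : α}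
    (hB : i ∈ B.1) (hA : i ∉ A.1) : ∃ G, {G ∈ Ioo A B | i ∈ G.1} = {G} := by
  obtain ⟨G, hAG, hGB, hi, hG⟩ := F.exists_cover hAB hB hA
  refine ⟨G, eq_singleton_iff_unique_mem.2 ⟨?_, fun H hH ↦ ?_⟩⟩
  · rw [mem_filter, mem_Ioo]
    exact ⟨⟨hAG, hGB.lt_of_ne fun h ↦ by rw [h] at hG; omega⟩, hi⟩
  · obtain ⟨hH, hiH⟩ := mem_filter.1 hH
    have := rk_lt_of_mem_Ioo hH
    exact F.cover_unique (mem_Ioo.1 hH).1 hAG (by omega) hG hiH hi hA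

theorem isBalanced_of_rk_eq (hrk : F.rk B = F.rk A + 2) (hAB : A < B) {w : F.Flat → ℝ}
    (hw : ∀ G ∈ Ioo A B, w G = 1) : IsBalanced A B w := by
  have hone {i : α} (hB : i ∈ B.1) (hA : i ∉ A.1) : ∑ G ∈ Ioo A B with i ∈ G.1, w G = 1 := by
    obtain ⟨G, hG⟩ := exists_filter_mem_eq_singleton hrk hAB hB hA
    rw [hG, sum_singleton, hw G (mem_filter.1 (hG ▸ mem_singleton_self G)).1]
  intro i hiB hiA j hjB hjA
  rw [hone hiB hiA, hone hjB hjA]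

theorem isBalanced_of_const_mul {c : ℝ} (hc : c ≠ 0) {w w' : F.Flat → ℝ} (hw' : IsBalanced A B w')
    (h : ∀ G ∈ Ioo A B, w' G = c * w G) : IsBalanced A B w := by
  have hsum (i : α) :
      ∑ G ∈ Ioo A B with i ∈ G.1, w' G = c * ∑ G ∈ Ioo A B with i ∈ G.1, w G := by
    rw [mul_sum]
    exact sum_congr rfl fun G hG ↦ h G (mem_filter.1 hG).1
  intro i hiB hiA j hjB hjA
  refine mul_left_cancel₀ hc ?_
  rw [← hsum, ← hsum, hw' hiB hiA hjB hjA]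

theorem isBalanced_vol (l : F.Flat → ℝ) (A B : F.Flat) :
    IsBalanced A B fun G ↦ vol l A G * vol l G B := by
  induction hn : F.rk B - F.rk A using Nat.strong_induction_on generalizing A B with | _ n ih
  rcases (Ioo A B).eq_empty_or_nonempty with hempty | ⟨G, hG⟩
  · simp [IsBalanced, hempty]
  have hrk := rk_lt_of_mem_Ioo hG
  rcases eq_or_ne (F.rk B) (F.rk A + 2) with h2 | h2
  · refine isBalanced_of_rk_eq h2 ((mem_Ioo.1 hG).1.trans (mem_Ioo.1 hG).2) fun H hH ↦ ?_
    have := rk_lt_of_mem_Ioo hH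
    rw [vol_of_rk_le l (by omega), vol_of_rk_le l (by omega), mul_one]
  · have hgap : (F.rk B - F.rk A - 2 : ℝ) ≠ 0 := by
      have : (F.rk A + 2 : ℝ) < F.rk B := mod_cast (by omega : F.rk A + 2 < F.rk B)
      linarith
    refine isBalanced_of_const_mul hgap (isBalanced_derivWeight (fun H hH ↦ ?_) (fun H hH ↦ ?_) l)
      fun H hH ↦ derivWeight_vol_self l hH
    all_goals
      have := rk_lt_of_mem_Ioo hH
      exact ih _ (by omega) _ _ rfl

/-! ### The Lorentzian property -/

theorem nonempty_Ioo (hAB : A < B) (hrk : F.rk A + 1 < F.rk B) : (Ioo A B).Nonempty := by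
  obtain ⟨i, hB, hA⟩ := exists_of_ssubset hAB
  obtain ⟨G, hAG, hGB, -, hG⟩ := F.exists_cover hAB hB hA
  exact ⟨G, mem_Ioo.2 ⟨hAG, hGB.lt_of_ne fun h ↦ by rw [h] at hG; omega⟩⟩

/-- Strict concavity as a function of the cardinality along every chain of three flats. -/
def IsStrictlyConcave (l : F.Flat → ℝ) : Prop :=
  ∀ ⦃A B G : F.Flat⦄, G ∈ Ioo A B → 0 < normalize A B l G

variable {l : F.Flat → ℝ}

theorem IsStrictlyConcave.vol_pos (hl : IsStrictlyConcave l) (hAB : A < B) : 0 < vol l A B := by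
  induction hn : F.rk B - F.rk A using Nat.strong_induction_on generalizing A B with | _ n ih
  rcases le_or_gt (F.rk B) (F.rk A + 1) with hle | hlt
  · simp [vol_of_rk_le l hle]
  have hgap : (0 : ℝ) < F.rk B - F.rk A - 1 := by
    have : (F.rk A + 1 : ℝ) < F.rk B := mod_cast hlt
    linarith
  refine pos_of_mul_pos_right (b := vol l A B) ?_ hgap.le
  rw [← deriv_vol_self l hAB, deriv_apply]
  refine sum_pos (fun G hG ↦ ?_) (nonempty_Ioo hAB hlt)
  have := rk_lt_of_mem_Ioo hG
  exact mul_pos (hl hG) (mul_pos (ih _ (by omega) (mem_Ioo.1 hG).1 rfl)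
    (ih _ (by omega) (mem_Ioo.1 hG).2 rfl))

theorem deriv_eq_zero_of_rk_le {V : F.Flat → F.Flat → ℝ} (h : F.rk B ≤ F.rk A + 1)
    (x : F.Flat → ℝ) : deriv V A B x = 0 := by
  rw [deriv_apply, Ioo_eq_empty_of_rk_le h, sum_empty]

theorem deriv2_eq_zero_of_rk_le {V : F.Flat → F.Flat → ℝ} (h : F.rk B ≤ F.rk A + 2)
    (x y : F.Flat → ℝ) : deriv2 V A B x y = 0 := by
  rw [deriv2_apply]
  refine sum_eq_zero fun G hG ↦ ?_
  have := rk_lt_of_mem_Ioo hG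
  rw [derivWeight_apply, deriv_eq_zero_of_rk_le (by omega), deriv_eq_zero_of_rk_le (by omega),
    zero_mul, mul_zero, add_zero, smul_zero]

/-- The Lorentzian property of the volume polynomial `p` of the interval from `A` to `B` at the
point `l`, namely `d * D²p(x, x) * p ≤ (d - 1) * (Dp(x))²` where `d` is the degree of `p`. -/
def IsLorentzian (l : F.Flat → ℝ) (A B : F.Flat) : Prop :=
  ∀ x, deriv2 (vol l) A B x x * ((F.rk B - F.rk A - 1) * vol l A B) ≤
    (F.rk B - F.rk A - 2) * deriv (vol l) A B x ^ 2

theorem deriv2Weight_mul_le_sq (hG : G ∈ Ioo A B) (hAG : IsLorentzian l A G)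
    (hGB : IsLorentzian l G B) (x : F.Flat → ℝ) :
    deriv2Weight (vol l) A B G x x * ((F.rk B - F.rk A - 2) * (vol l A G * vol l G B)) ≤
      (F.rk B - F.rk A - 3) * derivWeight (vol l) A B G x ^ 2 := by
  obtain ⟨hA, hB⟩ := rk_lt_of_mem_Ioo hG
  have hA' : (F.rk A + 1 : ℝ) ≤ F.rk G := mod_cast hA
  have hB' : (F.rk G + 1 : ℝ) ≤ F.rk B := mod_cast hB
  have degenerate {A B : F.Flat} (h : (F.rk B - F.rk A - 1 : ℝ) = 0) :
      deriv (vol l) A B x = 0 ∧ deriv2 (vol l) A B x x = 0 := by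
    have : F.rk B = F.rk A + 1 := by
      have : (F.rk B : ℝ) = F.rk A + 1 := by linarith
      exact_mod_cast this
    exact ⟨deriv_eq_zero_of_rk_le this.le x, deriv2_eq_zero_of_rk_le (by omega) x x⟩
  have h := product_rule_mul_le_sq (m := F.rk G - F.rk A - 1) (n := F.rk B - F.rk G - 1)
    (by linarith) (by linarith) ((hAG x).trans_eq (by ring)) ((hGB x).trans_eq (by ring))
    degenerate degenerate
  rw [deriv2Weight, derivWeight_apply]
  convert h using 2 <;> ring

theorem eqvGen_lt_Ioo (hrk : F.rk A + 2 < F.rk B) (G H : Ioo A B) :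
    Relation.EqvGen (· < ·) G H := by
  have of_le {G H : Ioo A B} (h : G ≤ H) : Relation.EqvGen (· < ·) G H :=
    h.lt_or_eq.elim (.rel _ _) fun h ↦ h ▸ .refl _
  have exists_atom (G : Ioo A B) : ∃ a : Ioo A B, a ≤ G ∧ F.rk a.1 = F.rk A + 1 ∧
      ∃ i ∈ a.1.1, i ∉ A.1 := by
    obtain ⟨hAG, hGB⟩ := mem_Ioo.1 G.2
    obtain ⟨i, hiG, hiA⟩ := exists_of_ssubset hAG
    obtain ⟨a, hAa, haG, hia, ha⟩ := F.exists_cover hAG hiG hiA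
    exact ⟨⟨a, mem_Ioo.2 ⟨hAa, haG.trans_lt hGB⟩⟩, haG, ha, i, hia, hiA⟩
  obtain ⟨a, haG, ha, -⟩ := exists_atom G
  obtain ⟨b, hbH, hb, i, hib, hiA⟩ := exists_atom H
  obtain ⟨hAa, haB⟩ := mem_Ioo.1 a.2
  obtain ⟨hAb, hbB⟩ := mem_Ioo.1 b.2
  suffices Relation.EqvGen (· < ·) a b from
    ((of_le haG).symm.trans _ _ _ this).trans _ _ _ (of_le hbH)
  by_cases hia : i ∈ a.1.1
  · exact of_le (Subtype.ext (F.cover_unique hAa hAb ha hb hia hib hiA)).le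
  obtain ⟨L, haL, hLB, hiL, hL⟩ := F.exists_cover haB (hbB.le hib) hia
  obtain ⟨b', hAb', hb'L, hib', hb'⟩ := F.exists_cover (hAa.trans haL) hiL hiA
  obtain rfl : b' = b := F.cover_unique hAb' hAb hb' hb hib' hib hiA
  have hLB' : L < B := hLB.lt_of_ne fun h ↦ by rw [h] at hL; omega
  exact (of_le (H := ⟨L, mem_Ioo.2 ⟨hAa.trans haL, hLB'⟩⟩) haL.le).trans _ _ _ (of_le hb'L).symm

/-- The Hessian of `V A B` as a matrix. -/
noncomputable def hessianMatrix (V : F.Flat → F.Flat → ℝ) (A B : F.Flat) :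
    Matrix (Ioo A B) (Ioo A B) ℝ :=
  of fun G H ↦ hessian V A B G H

theorem hessianMatrix_isSymm (V : F.Flat → F.Flat → ℝ) : (hessianMatrix V A B).IsSymm := by
  ext G H
  exact hessian_comm ..

theorem hessianMatrix_mulVec_normalize (V : F.Flat → F.Flat → ℝ) (x : F.Flat → ℝ) (G : Ioo A B) :
    (hessianMatrix V A B *ᵥ fun H ↦ normalize A B x H) G = derivWeight V A B G x := by
  rw [derivWeight_eq_sum_hessian V G.2, ← sum_coe_sort]
  exact sum_congr rfl fun H _ ↦ mul_comm _ _

theorem normalize_dotProduct_hessianMatrix_mulVec (V : F.Flat → F.Flat → ℝ) (x y : F.Flat → ℝ) :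
    (fun G : Ioo A B ↦ normalize A B x G) ⬝ᵥ
      hessianMatrix V A B *ᵥ (fun H ↦ normalize A B y H) = deriv2 V A B x y := by
  rw [deriv2_apply, ← sum_coe_sort]
  exact sum_congr rfl fun G _ ↦ by rw [hessianMatrix_mulVec_normalize, smul_eq_mul]

theorem hessian_of_lt (V : F.Flat → F.Flat → ℝ) (h : G < H) :
    hessian V A B G H = V A G * V G H * V H B := by
  simp [hessian, h, h.not_gt, h.ne]

theorem hessian_of_not_lt (V : F.Flat → F.Flat → ℝ) (hGH : ¬ G < H) (hHG : ¬ H < G) (h : G ≠ H) :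
    hessian V A B G H = 0 := by
  simp [hessian, h, hGH, hHG]

theorem exists_normalize_eq (y : Ioo A B → ℝ) :
    ∃ x : F.Flat → ℝ, (fun G : Ioo A B ↦ normalize A B x G) = y := by
  refine ⟨Function.extend Subtype.val y 0, funext fun G ↦ ?_⟩
  have hend (K : F.Flat) (hK : K ∉ Ioo A B) : Function.extend Subtype.val y 0 K = 0 :=
    Function.extend_apply' _ _ _ fun ⟨K', hK'⟩ ↦ hK (hK' ▸ K'.2)
  rw [normalize_apply_of_eq_zero (hend A left_notMem_Ioo) (hend B right_notMem_Ioo),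
    Subtype.val_injective.extend_apply]

theorem IsStrictlyConcave.hessian_pos (hl : IsStrictlyConcave l) (hG : G ∈ Ioo A B)
    (hH : H ∈ Ioo A B) (h : G < H) : 0 < hessian (vol l) A B G H := by
  rw [hessian_of_lt _ h]
  exact mul_pos (mul_pos (hl.vol_pos (mem_Ioo.1 hG).1) (hl.vol_pos h)) (hl.vol_pos (mem_Ioo.1 hH).2)

theorem IsStrictlyConcave.hessian_nonneg (hl : IsStrictlyConcave l) (hG : G ∈ Ioo A B)
    (hH : H ∈ Ioo A B) (h : G ≠ H) : 0 ≤ hessian (vol l) A B G H := by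
  by_cases hGH : G < H
  · exact (hl.hessian_pos hG hH hGH).le
  by_cases hHG : H < G
  · rw [hessian_comm]
    exact (hl.hessian_pos hH hG hHG).le
  · rw [hessian_of_not_lt _ hGH hHG h]

theorem deriv2_vol_le (hl : IsStrictlyConcave l) (hrk : F.rk A + 3 < F.rk B)
    (hlor : ∀ G ∈ Ioo A B, IsLorentzian l A G ∧ IsLorentzian l G B) (x : F.Flat → ℝ) :
    deriv2 (vol l) A B x x ≤ ∑ G ∈ Ioo A B,
      normalize A B l G * derivWeight (vol l) A B G x ^ 2 / derivWeight (vol l) A B G l := by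
  have hgap : (F.rk A + 3 : ℝ) < F.rk B := mod_cast hrk
  have hgap' : (0 : ℝ) < F.rk B - F.rk A - 3 := by linarith
  refine le_of_mul_le_mul_left ?_ hgap'
  rw [rk_mul_deriv2_vol, mul_sum]
  refine sum_le_sum fun G hG ↦ ?_
  have hvol : 0 < (F.rk B - F.rk A - 2) * (vol l A G * vol l G B) :=
    mul_pos (by linarith) (mul_pos (hl.vol_pos (mem_Ioo.1 hG).1) (hl.vol_pos (mem_Ioo.1 hG).2))
  rw [derivWeight_vol_self l hG, mul_div_assoc, mul_left_comm]
  refine mul_le_mul_of_nonneg_left ?_ (hl hG).le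
  rw [mul_div_assoc', le_div_iff₀ hvol]
  exact deriv2Weight_mul_le_sq hG (hlor G hG).1 (hlor G hG).2 x

theorem deriv2_vol_nonpos_of_deriv_eq_zero (hl : IsStrictlyConcave l) (hrk : F.rk A + 3 < F.rk B)
    (hlor : ∀ G ∈ Ioo A B, IsLorentzian l A G ∧ IsLorentzian l G B) {x : F.Flat → ℝ}
    (hx : deriv (vol l) A B x = 0) : deriv2 (vol l) A B x x ≤ 0 := by
  have hgap : (F.rk A + 3 : ℝ) < F.rk B := mod_cast hrk
  rw [← normalize_dotProduct_hessianMatrix_mulVec]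
  refine dotProduct_mulVec_nonpos_of_bochner (l := fun G : Ioo A B ↦ normalize A B l G)
    (hessianMatrix_isSymm _)
    (fun G H h ↦ hl.hessian_nonneg G.2 H.2 (Subtype.coe_injective.ne h)) (fun G H ↦ ?_)
    (fun G ↦ hl G.2) (fun G ↦ ?_) (fun y ↦ ?_) ?_
  · exact (eqvGen_lt_Ioo (by omega) G H).mono fun G H h ↦ hl.hessian_pos G.2 H.2 h
  · rw [hessianMatrix_mulVec_normalize, derivWeight_vol_self l G.2]
    exact mul_pos (by linarith)
      (mul_pos (hl.vol_pos (mem_Ioo.1 G.2).1) (hl.vol_pos (mem_Ioo.1 G.2).2))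
  · obtain ⟨y, rfl⟩ := exists_normalize_eq y
    simp only [normalize_dotProduct_hessianMatrix_mulVec, hessianMatrix_mulVec_normalize]
    rw [sum_coe_sort (Ioo A B) fun G ↦
      normalize A B l G * derivWeight (vol l) A B G y ^ 2 / derivWeight (vol l) A B G l]
    exact deriv2_vol_le hl hrk hlor y
  · rw [normalize_dotProduct_hessianMatrix_mulVec, deriv2_vol_self, hx, mul_zero]

theorem deriv_vol_of_rk_eq_two (hAB : A < B) (hrk : F.rk B = F.rk A + 2) (x : F.Flat → ℝ) :
    deriv (vol l) A B x = ∑ G ∈ Ioo A B, x G - #(Ioo A B) * x A - (x B - x A) := by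
  obtain ⟨i, hB, hA⟩ := exists_of_ssubset hAB
  have hvol (G : F.Flat) (hG : G ∈ Ioo A B) : vol l A G * vol l G B = 1 := by
    have := rk_lt_of_mem_Ioo hG
    rw [vol_of_rk_le l (by omega), vol_of_rk_le l (by omega), mul_one]
  obtain ⟨K, hK⟩ := exists_filter_mem_eq_singleton hrk hAB hB hA
  rw [deriv_apply, ← sum_singleton (fun _ ↦ x B - x A) K, ← hK, ← nsmul_eq_mul, ← sum_const,
    sum_filter, ← sum_sub_distrib, ← sum_sub_distrib]
  simp only [smul_eq_mul]
  rw [(isBalanced_vol l A B).sum_normalize_mul hB hA]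
  exact sum_congr rfl fun G hG ↦ by rw [hvol G hG, mul_one]

theorem card_filter_gt_Ioo (hrk : F.rk B = F.rk A + 3) (hG : G ∈ Ioo A B) (hH : H ∈ Ioo A B)
    (hGrk : F.rk G = F.rk A + 1) (hHrk : F.rk H = F.rk A + 1) (h : G ≠ H) :
    #{L ∈ Ioo G B | H < L} = 1 := by
  obtain ⟨hAG, hGB⟩ := mem_Ioo.1 hG
  obtain ⟨hAH, hHB⟩ := mem_Ioo.1 hH
  obtain ⟨i, hiH, hiA⟩ := exists_of_ssubset hAH
  have hiG : i ∉ G.1 := fun hi ↦ h (F.cover_unique hAG hAH hGrk hHrk hi hiH hiA)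
  obtain ⟨L, hL⟩ := exists_filter_mem_eq_singleton (by omega) hGB (hHB.le hiH) hiG
  rw [card_eq_one]
  refine ⟨L, hL ▸ filter_congr fun K hK ↦ ⟨fun hHK ↦ hHK.le hiH, fun hiK ↦ ?_⟩⟩
  have hGK := (mem_Ioo.1 hK).1
  obtain ⟨H', hAH', hH'K, hiH', hH'⟩ := F.exists_cover (hAG.trans hGK) hiK hiA
  obtain rfl : H' = H := F.cover_unique hAH' hAH hH' hHrk hiH' hiH hiA
  exact hH'K.lt_of_ne fun hH'K ↦ by have := F.rk_strictMono hGK; rw [← hH'K] at this; omega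

theorem sum_Ioo_sum_Ioo_of_rk_eq_three (hrk : F.rk B = F.rk A + 3) (hG : G ∈ Ioo A B)
    (hGrk : F.rk G = F.rk A + 1) (x : F.Flat → ℝ) :
    ∑ L ∈ Ioo G B, ∑ H ∈ Ioo A L, x H =
      ∑ H ∈ Ioo A B with F.rk H = F.rk A + 1, x H + (#(Ioo G B) - 1) * x G := by
  set atoms := {H ∈ Ioo A B | F.rk H = F.rk A + 1}
  have hcount (H : F.Flat) (hH : H ∈ atoms) : (#{L ∈ Ioo G B | H < L} : ℝ) * x H =
      x H + if G = H then (#(Ioo G B) - 1) * x H else 0 := by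
    obtain ⟨hH, hHrk⟩ := mem_filter.1 hH
    split_ifs with h
    · subst h
      rw [filter_true_of_mem fun L hL ↦ (mem_Ioo.1 hL).1]
      ring
    · rw [card_filter_gt_Ioo hrk hG hH hGrk hHrk h]
      ring
  calc ∑ L ∈ Ioo G B, ∑ H ∈ Ioo A L, x H
      = ∑ H ∈ atoms, ∑ L ∈ Ioo G B with H < L, x H := by
        refine sum_comm' fun L H ↦ ?_
        simp only [atoms, mem_filter, mem_Ioo]
        refine ⟨fun h ↦ ⟨⟨h.1, h.2.2⟩, ⟨h.2.1, h.2.2.trans h.1.2⟩, ?_⟩,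
          fun h ↦ ⟨h.1.1, h.2.1.1, h.1.2⟩⟩
        have := F.rk_strictMono h.1.2
        have := F.rk_strictMono h.2.1
        have := F.rk_strictMono h.2.2
        omega
    _ = ∑ H ∈ atoms, (x H + if G = H then (#(Ioo G B) - 1) * x H else 0) :=
        sum_congr rfl fun H hH ↦ by rw [sum_const, nsmul_eq_mul, hcount H hH]
    _ = ∑ H ∈ atoms, x H + (#(Ioo G B) - 1) * x G := by
        rw [sum_add_distrib, sum_ite_eq, if_pos (mem_filter.2 ⟨hG, hGrk⟩)]

theorem sum_filter_rk_ne_sum_Ioo (hrk : F.rk B = F.rk A + 3) (f : F.Flat → F.Flat → ℝ) :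
    ∑ L ∈ Ioo A B with F.rk L ≠ F.rk A + 1, ∑ G ∈ Ioo A L, f G L =
      ∑ G ∈ Ioo A B with F.rk G = F.rk A + 1, ∑ L ∈ Ioo G B, f G L := by
  refine sum_comm' fun L G ↦ ?_
  simp only [mem_filter, mem_Ioo]
  constructor
  · rintro ⟨⟨⟨-, hLB⟩, -⟩, hAG, hGL⟩
    have := F.rk_strictMono hAG
    have := F.rk_strictMono hGL
    have := F.rk_strictMono hLB
    exact ⟨⟨hGL, hLB⟩, ⟨hAG, hGL.trans hLB⟩, by omega⟩
  · rintro ⟨⟨hGL, hLB⟩, ⟨hAG, -⟩, hG⟩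
    have := F.rk_strictMono hGL
    exact ⟨⟨⟨hAG.trans hGL, hLB⟩, by omega⟩, hAG, hGL⟩

theorem sum_sq_sum_Ioo_of_rk_eq_three (hrk : F.rk B = F.rk A + 3) (x : F.Flat → ℝ) :
    ∑ L ∈ Ioo A B with F.rk L ≠ F.rk A + 1, (∑ G ∈ Ioo A L, x G) ^ 2 =
      (∑ G ∈ Ioo A B with F.rk G = F.rk A + 1, x G) ^ 2 +
        ∑ G ∈ Ioo A B with F.rk G = F.rk A + 1, x G * ((#(Ioo G B) - 1) * x G) := by
  have h := sum_filter_rk_ne_sum_Ioo hrk fun G L ↦ x G * ∑ H ∈ Ioo A L, x H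
  simp only [← sum_mul, ← mul_sum, ← sq] at h
  rw [h, sq, sum_mul, ← sum_add_distrib]
  refine sum_congr rfl fun G hG ↦ ?_
  rw [sum_Ioo_sum_Ioo_of_rk_eq_three hrk (mem_filter.1 hG).1 (mem_filter.1 hG).2, mul_add]

theorem derivWeight_vol_of_rk_eq_add_one (hrk : F.rk B = F.rk A + 3) (hG : G ∈ Ioo A B)
    (hGrk : F.rk G = F.rk A + 1) (x : F.Flat → ℝ) : derivWeight (vol l) A B G x =
      ∑ L ∈ Ioo G B, normalize A B x L - (#(Ioo G B) - 1) * normalize A B x G := by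
  obtain ⟨hAG, hGB⟩ := mem_Ioo.1 hG
  rw [← derivWeight_normalize (A := A) (B := B), derivWeight_apply,
    deriv_eq_zero_of_rk_le hGrk.le, vol_of_rk_le l hGrk.le,
    deriv_vol_of_rk_eq_two hGB (by omega), normalize_right (hAG.trans hGB)]
  ring

theorem derivWeight_vol_of_rk_ne_add_one (hrk : F.rk B = F.rk A + 3) (hG : G ∈ Ioo A B)
    (hGrk : F.rk G ≠ F.rk A + 1) (x : F.Flat → ℝ) : derivWeight (vol l) A B G x =
      ∑ H ∈ Ioo A G, normalize A B x H - normalize A B x G := by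
  have := rk_lt_of_mem_Ioo hG
  rw [← derivWeight_normalize (A := A) (B := B), derivWeight_apply,
    deriv_eq_zero_of_rk_le (A := G) (by omega), vol_of_rk_le l (A := G) (by omega),
    deriv_vol_of_rk_eq_two (mem_Ioo.1 hG).1 (by omega), normalize_left]
  ring

/-- In rank three the second derivative has one positive square. -/
theorem deriv2_vol_of_rk_eq_three (hrk : F.rk B = F.rk A + 3) (x : F.Flat → ℝ) :
    deriv2 (vol l) A B x x =
      (∑ G ∈ Ioo A B with F.rk G = F.rk A + 1, normalize A B x G) ^ 2 -
        ∑ L ∈ Ioo A B with F.rk L ≠ F.rk A + 1,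
          (normalize A B x L - ∑ G ∈ Ioo A L, normalize A B x G) ^ 2 := by
  set y := normalize A B x
  have mixed : ∑ L ∈ Ioo A B with F.rk L ≠ F.rk A + 1, (∑ G ∈ Ioo A L, y G) * y L =
      ∑ G ∈ Ioo A B with F.rk G = F.rk A + 1, y G * ∑ L ∈ Ioo G B, y L := by
    simpa only [sum_mul, mul_sum] using sum_filter_rk_ne_sum_Ioo hrk fun G L ↦ y G * y L
  calc deriv2 (vol l) A B x x
      = ∑ G ∈ Ioo A B with F.rk G = F.rk A + 1,
            y G * (∑ L ∈ Ioo G B, y L - (#(Ioo G B) - 1) * y G) +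
          ∑ L ∈ Ioo A B with F.rk L ≠ F.rk A + 1, y L * (∑ G ∈ Ioo A L, y G - y L) := by
        rw [deriv2_apply, ← sum_filter_add_sum_filter_not _ fun G ↦ F.rk G = F.rk A + 1]
        exact congrArg₂ _ (sum_congr rfl fun G hG ↦ by
          rw [derivWeight_vol_of_rk_eq_add_one hrk (mem_filter.1 hG).1 (mem_filter.1 hG).2,
            smul_eq_mul]) (sum_congr rfl fun L hL ↦ by
          rw [derivWeight_vol_of_rk_ne_add_one hrk (mem_filter.1 hL).1 (mem_filter.1 hL).2,
            smul_eq_mul])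
    _ = _ := by
        simp only [mul_sub, sum_sub_distrib, sub_sq, sum_add_distrib, ← mixed,
          sum_sq_sum_Ioo_of_rk_eq_three hrk y]
        simp only [mul_comm (y _), mul_assoc, ← mul_sum, sq]
        ring

theorem deriv2_vol_nonpos_of_rk_eq_three (hrk : F.rk B = F.rk A + 3) {x : F.Flat → ℝ}
    (hx : ∑ G ∈ Ioo A B with F.rk G = F.rk A + 1, normalize A B x G = 0) :
    deriv2 (vol l) A B x x ≤ 0 := by
  rw [deriv2_vol_of_rk_eq_three hrk, hx, zero_pow two_ne_zero, zero_sub]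
  exact neg_nonpos.2 (sum_nonneg fun L _ ↦ sq_nonneg _)

theorem IsStrictlyConcave.isLorentzian (hl : IsStrictlyConcave l) (hAB : A < B) :
    IsLorentzian l A B := by
  induction hn : F.rk B - F.rk A using Nat.strong_induction_on generalizing A B with | _ n ih
  intro x
  have hrk := F.rk_strictMono hAB
  rcases le_or_gt (F.rk B) (F.rk A + 2) with hle | hlt
  · rw [deriv2_eq_zero_of_rk_le hle, zero_mul]
    obtain h1 | h2 : F.rk B ≤ F.rk A + 1 ∨ F.rk B = F.rk A + 2 := by omega
    · rw [deriv_eq_zero_of_rk_le h1]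
      simp
    · simp [h2]
  have hgap : (0 : ℝ) < F.rk B - F.rk A - 2 := by
    have : (F.rk A + 2 : ℝ) < F.rk B := mod_cast hlt
    linarith
  have hdiag : deriv2 (vol l) A B l l =
      (F.rk B - F.rk A - 2) * ((F.rk B - F.rk A - 1) * vol l A B) := by
    rw [deriv2_vol_self, deriv_vol_self l hAB]
  have hpos : 0 < deriv2 (vol l) A B l l :=
    hdiag ▸ mul_pos hgap (mul_pos (by linarith) (hl.vol_pos hAB))
  obtain ⟨φ, hφ⟩ : ∃ φ : (F.Flat → ℝ) →ₗ[ℝ] ℝ, ∀ y, φ y = 0 → deriv2 (vol l) A B y y ≤ 0 := by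
    obtain h3 | h4 : F.rk B = F.rk A + 3 ∨ F.rk A + 3 < F.rk B := by omega
    · refine ⟨∑ G ∈ Ioo A B with F.rk G = F.rk A + 1, LinearMap.proj G ∘ₗ normalize A B,
        fun y hy ↦ deriv2_vol_nonpos_of_rk_eq_three h3 ?_⟩
      simpa only [LinearMap.sum_apply, LinearMap.comp_apply, LinearMap.proj_apply] using hy
    · refine ⟨deriv (vol l) A B, fun y ↦ deriv2_vol_nonpos_of_deriv_eq_zero hl h4 fun G hG ↦ ?_⟩
      have := rk_lt_of_mem_Ioo hG
      exact ⟨ih _ (by omega) (mem_Ioo.1 hG).1 rfl, ih _ (by omega) (mem_Ioo.1 hG).2 rfl⟩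
  have h := apply_mul_apply_le_sq_of_neg_on_ker (B := deriv2 (vol l) A B)
    ⟨fun y z ↦ deriv2_comm _ y z⟩ hφ hpos x
  rw [hdiag, deriv2_vol_self] at h
  refine le_of_mul_le_mul_left ?_ hgap
  linarith

/-! ### Möbius numbers as a degenerate limit of volumes -/

theorem continuous_vol (A B : F.Flat) : Continuous fun l : F.Flat → ℝ ↦ vol l A B := by
  induction hn : F.rk B - F.rk A using Nat.strong_induction_on generalizing A B with | _ n ih
  rcases le_or_gt (F.rk B) (F.rk A + 1) with hle | hlt
  · simp only [vol_of_rk_le _ hle, continuous_const]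
  · have hvol (l : F.Flat → ℝ) : vol l A B =
        (∑ G : Ioo A B, normalize A B l G * (vol l A G * vol l G B)) / (F.rk B - F.rk A - 1) := by
      rw [vol, if_neg hlt.not_ge]
    simp only [hvol]
    refine (continuous_finsetSum _ fun G _ ↦ ?_).div_const _
    have := rk_lt_of_mem_Ioo G.2
    exact (continuous_normalize A B G).mul
      ((ih _ (by omega) A G rfl).mul (ih _ (by omega) G B rfl))

theorem continuous_deriv_vol (A B : F.Flat) (x : F.Flat → ℝ) :
    Continuous fun l ↦ deriv (vol l) A B x := by
  simp only [deriv_apply, smul_eq_mul]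
  exact continuous_finsetSum _ fun G _ ↦
    continuous_const.mul ((continuous_vol A G).mul (continuous_vol G B))

theorem continuous_deriv2_vol (A B : F.Flat) (x y : F.Flat → ℝ) :
    Continuous fun l ↦ deriv2 (vol l) A B x y := by
  simp only [deriv2_apply, derivWeight_apply, smul_eq_mul]
  exact continuous_finsetSum _ fun G _ ↦
    continuous_const.mul (((continuous_deriv_vol A G y).mul (continuous_vol G B)).add
      ((continuous_vol A G).mul (continuous_deriv_vol G B y)))

theorem isClosed_setOf_isLorentzian (A B : F.Flat) :
    IsClosed {l : F.Flat → ℝ | IsLorentzian l A B} := by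
  simp only [IsLorentzian, Set.ofPred_forall]
  exact isClosed_iInter fun x ↦ isClosed_le
    ((continuous_deriv2_vol A B x x).mul ((continuous_vol A B).const_mul _))
    (((continuous_deriv_vol A B x).pow 2).const_mul _)

section Bot

variable [OrderBot F.Flat] {T : F.Flat}

theorem ne_bot_of_mem_Ioo (hG : G ∈ Ioo A B) : G ≠ ⊥ :=
  (bot_le.trans_lt (mem_Ioo.1 hG).1).ne'

/-- The point at which the volumes of the lower intervals are, up to factorials, the unsigned
Möbius numbers. It is only a limit of strictly concave functions. -/
def negBot : F.Flat → ℝ := Pi.single ⊥ (-1)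

theorem negBot_of_ne (h : G ≠ ⊥) : negBot G = 0 := Pi.single_eq_of_ne h _

theorem normalize_negBot_nonneg (hG : G ∈ Ioo A B) : 0 ≤ normalize A B negBot G := by
  obtain ⟨hAG, hGB⟩ := mem_Ioo.1 hG
  have hA := card_lt_card_of_lt hAG
  have hB := card_lt_card_of_lt hGB
  have hle : relCard A B G ≤ 1 := div_le_one_of_le₀ (by linarith) (by linarith)
  rw [normalize_apply, negBot_of_ne (ne_bot_of_mem_Ioo hG),
    negBot_of_ne (bot_le.trans_lt hGB).ne']
  rcases eq_or_ne A ⊥ with rfl | hbot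
  · rw [negBot, Pi.single_eq_same]
    linarith
  · simp [negBot_of_ne hbot]

theorem isStrictlyConcave_negBot_sub {ε : ℝ} (hε : 0 < ε) :
    IsStrictlyConcave (negBot - ε • fun G : F.Flat ↦ (#G.1 : ℝ) ^ 2) := by
  intro A B G hG
  obtain ⟨hAG, hGB⟩ := mem_Ioo.1 hG
  have hA := sub_pos.2 (card_lt_card_of_lt hAG)
  have hB := sub_pos.2 (card_lt_card_of_lt hGB)
  rw [map_sub, map_smul, Pi.sub_apply, Pi.smul_apply, normalize_sq_card (hAG.trans hGB),
    smul_eq_mul, mul_neg, sub_neg_eq_add]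
  exact add_pos_of_nonneg_of_pos (normalize_negBot_nonneg hG) (by positivity)

open Filter Topology in
theorem isLorentzian_negBot (hAB : A < B) : IsLorentzian negBot A B := by
  have hlim : Tendsto (fun ε : ℝ ↦ negBot - ε • fun G : F.Flat ↦ (#G.1 : ℝ) ^ 2) (𝓝[>] 0)
      (𝓝 negBot) := by
    refine (Continuous.tendsto' ?_ _ _ (by simp)).mono_left nhdsWithin_le_nhds
    fun_prop
  refine (isClosed_setOf_isLorentzian A B).mem_of_tendsto hlim ?_
  filter_upwards [self_mem_nhdsWithin] with ε hε
  exact (isStrictlyConcave_negBot_sub hε).isLorentzian hAB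

theorem vol_negBot_eq_zero (hA : A ≠ ⊥) (h : F.rk A + 1 < F.rk B) : vol negBot A B = 0 := by
  rw [vol, if_neg h.not_ge, sum_eq_zero, zero_div]
  rintro ⟨G, hG⟩ -
  rw [normalize_apply, negBot_of_ne hA, negBot_of_ne (ne_bot_of_mem_Ioo hG),
    negBot_of_ne (bot_le.trans_lt ((mem_Ioo.1 hG).1.trans (mem_Ioo.1 hG).2)).ne']
  simp

theorem vol_negBot_of_mem_Ioo (hG : G ∈ Ioo A B) :
    vol negBot G B = if F.rk G + 1 = F.rk B then 1 else 0 := by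
  have := rk_lt_of_mem_Ioo hG
  split_ifs with h
  · exact vol_of_rk_le _ h.ge
  · exact vol_negBot_eq_zero (ne_bot_of_mem_Ioo hG) (by omega)

theorem sum_Ioo_mul_vol_negBot (f : F.Flat → ℝ) :
    ∑ G ∈ Ioo A B, f G * (vol negBot A G * vol negBot G B) =
      ∑ G ∈ Ioo A B with F.rk G + 1 = F.rk B, f G * vol negBot A G := by
  rw [sum_filter]
  refine sum_congr rfl fun G hG ↦ ?_
  rw [vol_negBot_of_mem_Ioo hG, mul_ite, mul_one, mul_zero, mul_ite, mul_zero]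

theorem rk_sub_one_mul_vol_negBot {i : α} (hB : i ∈ B.1) (hbot : i ∉ (⊥ : F.Flat).1) :
    (F.rk B - F.rk ⊥ - 1) * vol negBot ⊥ B =
      ∑ G ∈ Ioo ⊥ B with F.rk G + 1 = F.rk B ∧ i ∉ G.1, vol negBot ⊥ G := by
  have hlt : ⊥ < B := bot_lt_iff_ne_bot.2 fun h ↦ hbot (h ▸ hB)
  rw [← deriv_vol_self _ hlt, deriv_apply]
  simp only [smul_eq_mul]
  rw [(isBalanced_vol negBot ⊥ B).sum_normalize_mul hB hbot, sum_Ioo_mul_vol_negBot,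
    ← filter_filter, sum_filter (fun G : F.Flat ↦ i ∉ G.1)]
  refine sum_congr rfl fun G hG ↦ ?_
  rw [negBot_of_ne (ne_bot_of_mem_Ioo (mem_filter.1 hG).1), negBot_of_ne hlt.ne', negBot,
    Pi.single_eq_same]
  split_ifs <;> simp_all

/-- The recursion satisfied by the unsigned Möbius numbers `|μ(⊥, G)|` of a matroid (Weisner). -/
structure IsMoebius (m : F.Flat → ℝ) : Prop where
  bot : m ⊥ = 1
  eq_sum : ∀ ⦃B : F.Flat⦄ ⦃i⦄, i ∈ B.1 → i ∉ (⊥ : F.Flat).1 →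
    m B = ∑ G with G < B ∧ F.rk G + 1 = F.rk B ∧ i ∉ G.1, m G

variable {m : F.Flat → ℝ}

theorem IsMoebius.eq_one (hm : IsMoebius m) (hB : F.rk B = F.rk ⊥ + 1) : m B = 1 := by
  have hlt : ⊥ < B := bot_lt_iff_ne_bot.2 fun h ↦ by rw [h] at hB; omega
  obtain ⟨i, hi, hbot⟩ := exists_of_ssubset hlt
  rw [hm.eq_sum hi hbot, sum_eq_single ⊥, hm.bot]
  · intro G hG hne
    have := F.rk_strictMono (bot_lt_iff_ne_bot.2 hne)
    have := (mem_filter.1 hG).2.2.1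
    omega
  · exact fun h ↦ (h <| mem_filter.2 ⟨mem_univ _, hlt, hB.symm, hbot⟩).elim

theorem IsMoebius.factorial_mul_vol (hm : IsMoebius m) {n : ℕ} (hB : F.rk B = F.rk ⊥ + n + 1) :
    n.factorial * vol negBot ⊥ B = m B := by
  induction n generalizing B with
  | zero => rw [vol_of_rk_le _ hB.le, hm.eq_one hB, Nat.factorial_zero, Nat.cast_one, one_mul]
  | succ n ih =>
    have hlt : ⊥ < B := bot_lt_iff_ne_bot.2 fun h ↦ by rw [h] at hB; omega
    obtain ⟨i, hi, hbot⟩ := exists_of_ssubset hlt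
    have hfilter : {G ∈ Ioo ⊥ B | F.rk G + 1 = F.rk B ∧ i ∉ G.1} =
        ({G | G < B ∧ F.rk G + 1 = F.rk B ∧ i ∉ G.1} : Finset F.Flat) := by
      ext G
      simp only [mem_filter, mem_Ioo, mem_univ, true_and, and_assoc, and_iff_right_iff_imp]
      rintro ⟨-, hG, -⟩
      exact bot_lt_iff_ne_bot.2 fun h ↦ by rw [h] at hG; omega
    calc ((n + 1).factorial : ℝ) * vol negBot ⊥ B
        = n.factorial * ((F.rk B - F.rk ⊥ - 1) * vol negBot ⊥ B) := by
          rw [hB, Nat.factorial_succ]; push_cast; ring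
      _ = m B := by
        rw [rk_sub_one_mul_vol_negBot hi hbot, mul_sum, hm.eq_sum hi hbot, hfilter]
        exact sum_congr rfl fun G hG ↦ ih (by have := (mem_filter.1 hG).2.2.1; omega)

theorem deriv_vol_negBot_bot {i : α} (hT : i ∈ T.1) (hbot : i ∉ (⊥ : F.Flat).1) :
    deriv (vol negBot) ⊥ T (-Pi.single T 1) =
      ∑ G ∈ Ioo ⊥ T with F.rk G + 1 = F.rk T ∧ i ∈ G.1, vol negBot ⊥ G := by
  have hne : (⊥ : F.Flat) ≠ T := fun h ↦ hbot (h ▸ hT)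
  rw [deriv_apply]
  simp only [smul_eq_mul]
  rw [(isBalanced_vol negBot ⊥ T).sum_normalize_mul hT hbot, sum_Ioo_mul_vol_negBot,
    ← filter_filter, sum_filter (fun G : F.Flat ↦ i ∈ G.1)]
  refine sum_congr rfl fun G hG ↦ ?_
  have hGT : G ≠ T := (mem_Ioo.1 (mem_filter.1 hG).1).2.ne
  split_ifs <;> simp [hne, hGT]

theorem deriv_vol_negBot_of_mem_Ioo (hG : G ∈ Ioo ⊥ T) :
    deriv (vol negBot) G T (-Pi.single T 1) = if F.rk G + 2 = F.rk T then 1 else 0 := by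
  have hGT := (mem_Ioo.1 hG).2
  split_ifs with h
  · rw [deriv_vol_of_rk_eq_two hGT h.symm, sum_eq_zero fun K hK ↦ ?_]
    · simp [hGT.ne]
    · simp [(mem_Ioo.1 hK).2.ne]
  · rw [deriv_apply]
    refine sum_eq_zero fun K hK ↦ ?_
    have := rk_lt_of_mem_Ioo hK
    rw [vol_negBot_of_mem_Ioo hK]
    split_ifs with hK'
    · rw [vol_negBot_eq_zero (ne_bot_of_mem_Ioo hG) (by omega), zero_mul, smul_zero]
    · rw [mul_zero, smul_zero]

theorem deriv2_vol_negBot_bot {i : α} (hT : i ∈ T.1) (hbot : i ∉ (⊥ : F.Flat).1) :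
    deriv2 (vol negBot) ⊥ T (-Pi.single T 1) (-Pi.single T 1) =
      ∑ G ∈ Ioo ⊥ T with F.rk G + 2 = F.rk T ∧ i ∈ G.1, vol negBot ⊥ G := by
  have hne : (⊥ : F.Flat) ≠ T := fun h ↦ hbot (h ▸ hT)
  rw [deriv2_apply]
  simp only [smul_eq_mul]
  rw [(isBalanced_derivWeight (fun G _ ↦ isBalanced_vol _ _ _) (fun G _ ↦ isBalanced_vol _ _ _)
    _).sum_normalize_mul hT hbot, sum_filter]
  refine sum_congr rfl fun G hG ↦ ?_
  have hGT : G ≠ T := (mem_Ioo.1 hG).2.ne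
  have hlower : deriv (vol negBot) ⊥ G (-Pi.single T 1) = 0 := by
    rw [deriv_apply]
    refine sum_eq_zero fun H hH ↦ ?_
    have hHT : H ≠ T := ((mem_Ioo.1 hH).2.trans (mem_Ioo.1 hG).2).ne
    rw [normalize_apply_of_eq_zero] <;> simp [hne, hGT, hHT]
  rw [derivWeight_apply, hlower, deriv_vol_negBot_of_mem_Ioo hG]
  by_cases hi : i ∈ G.1 <;> simp [hi, hne, hGT]

theorem IsMoebius.sum_mul_le_sq (hm : IsMoebius m) {i : α} (hT : i ∈ T.1)
    (hbot : i ∉ (⊥ : F.Flat).1) {n : ℕ} (hrk : F.rk T = F.rk ⊥ + n + 3) :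
    (∑ G ∈ Ioo ⊥ T with F.rk G + 2 = F.rk T ∧ i ∈ G.1, m G) * m T ≤
      (∑ G ∈ Ioo ⊥ T with F.rk G + 1 = F.rk T ∧ i ∈ G.1, m G) ^ 2 := by
  have hlt : ⊥ < T := bot_lt_iff_ne_bot.2 fun h ↦ hbot (h ▸ hT)
  have hlor := isLorentzian_negBot hlt (-Pi.single T 1)
  rw [deriv_vol_negBot_bot hT hbot, deriv2_vol_negBot_bot hT hbot, hrk] at hlor
  have hsum {j k : ℕ} (hjk : k + j = n + 2) :
      ∑ G ∈ Ioo ⊥ T with F.rk G + j = F.rk T ∧ i ∈ G.1, m G = k.factorial *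
        ∑ G ∈ Ioo ⊥ T with F.rk G + j = F.rk T ∧ i ∈ G.1, vol negBot ⊥ G := by
    rw [mul_sum]
    refine sum_congr rfl fun G hG ↦ (hm.factorial_mul_vol ?_).symm
    have := (mem_filter.1 hG).2.1
    omega
  rw [hsum (k := n) rfl, hsum (k := n + 1) rfl, ← hm.factorial_mul_vol (n := n + 2) hrk, hrk]
  have hfac : (0 : ℝ) ≤ (n.factorial : ℝ) ^ 2 * (n + 1) := by positivity
  have := mul_le_mul_of_nonneg_left hlor hfac
  simp only [Nat.factorial_succ]
  push_cast at this ⊢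
  nlinarith

end Bot

end FlatFamily

/-! ### Matroids -/

/-- The rank function of a matroid on `α`. The axioms only involve adding one or two elements to a
set, which makes them easy to check for truncations and cones. -/
structure RankFunction (α : Type*) [DecidableEq α] where
  r : Finset α → ℕ
  r_empty : r ∅ = 0
  r_le_insert : ∀ X e, r X ≤ r (insert e X)
  r_insert_le : ∀ X e, r (insert e X) ≤ r X + 1
  r_insert_insert : ∀ ⦃X e f⦄, r (insert e X) = r X → r (insert f X) = r X →
    r (insert e (insert f X)) = r X

namespace RankFunction

open Finset

variable {α : Type*} [DecidableEq α] (M : RankFunction α) {X Y : Finset α} {e : α}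

theorem r_mono : Monotone M.r := by
  intro X Y h
  rw [← union_eq_right.2 h, union_comm]
  generalize Y = Z
  induction Z using Finset.induction_on with
  | empty => simp
  | insert a Z _ ih => exact (ih.trans (M.r_le_insert _ a)).trans_eq (by rw [insert_union])

theorem r_insert_insert_eq (he : M.r (insert e X) = M.r X) (f : α) :
    M.r (insert e (insert f X)) = M.r (insert f X) := by
  have hle := M.r_le_insert X f
  rcases eq_or_ne (M.r (insert f X)) (M.r X) with h | h
  · rw [M.r_insert_insert he h, h]
  · have hef := M.r_insert_le (insert e X) f
    have hfe := M.r_le_insert (insert f X) e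
    rw [insert_comm] at hef
    omega

theorem r_insert_eq_of_subset (h : X ⊆ Y) (he : M.r (insert e X) = M.r X) :
    M.r (insert e Y) = M.r Y := by
  rw [← union_eq_right.2 h, union_comm]
  generalize Y = Z
  induction Z using Finset.induction_on with
  | empty => simpa using he
  | insert a Z _ ih => rw [insert_union]; exact M.r_insert_insert_eq ih a

/-- Every element has rank `1`. -/
def IsLoopless : Prop := ∀ e, M.r {e} = 1

/-- The truncation of a matroid to rank at most `N`. -/
@[simps] def trunc (N : ℕ) : RankFunction α where
  r X := min (M.r X) N
  r_empty := by rw [M.r_empty, zero_min]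
  r_le_insert X e := min_le_min_right N (M.r_le_insert X e)
  r_insert_le X e := by have := M.r_insert_le X e; omega
  r_insert_insert X e f he hf := by
    have := M.r_le_insert X e
    have := M.r_le_insert X f
    have := M.r_le_insert (insert f X) e
    rcases lt_or_ge (M.r X) N with h | h
    · rw [M.r_insert_insert (by omega) (by omega)]
    · omega

variable {M} in
theorem IsLoopless.trunc (hM : M.IsLoopless) {N : ℕ} (hN : N ≠ 0) : (M.trunc N).IsLoopless := by
  intro e
  rw [trunc_r, hM e]
  omega

variable [Fintype α]

/-- The closure operator of a matroid. -/
def closure (X : Finset α) : Finset α := {e | M.r (insert e X) = M.r X}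

theorem mem_closure : e ∈ M.closure X ↔ M.r (insert e X) = M.r X := by simp [closure]

theorem r_insert_of_notMem_closure (h : e ∉ M.closure X) : M.r (insert e X) = M.r X + 1 := by
  have := M.r_le_insert X e
  have := M.r_insert_le X e
  rw [mem_closure] at h
  omega

theorem r_insert_eq_add_one_iff : M.r (insert e X) = M.r X + 1 ↔ e ∉ M.closure X :=
  ⟨fun h he ↦ by rw [mem_closure] at he; omega, M.r_insert_of_notMem_closure⟩

theorem subset_closure (X : Finset α) : X ⊆ M.closure X := fun e he ↦ by
  rw [mem_closure, insert_eq_of_mem he]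

theorem r_closure (X : Finset α) : M.r (M.closure X) = M.r X := by
  suffices ∀ Z ⊆ M.closure X, M.r (Z ∪ X) = M.r X by
    simpa only [union_eq_left.2 (M.subset_closure X)] using this _ subset_rfl
  intro Z
  induction Z using Finset.induction_on with
  | empty => simp
  | insert a Z _ ih =>
    intro h
    rw [insert_subset_iff, mem_closure] at h
    rw [insert_union, M.r_insert_eq_of_subset subset_union_right h.1, ih h.2]

/-- The flats of a matroid. -/
def flats : Finset (Finset α) := {F | M.closure F = F}

variable {F G : Finset α}

theorem mem_flats : F ∈ M.flats ↔ M.closure F = F := by simp [flats]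

theorem closure_subset (hF : F ∈ M.flats) (h : X ⊆ F) : M.closure X ⊆ F := fun e he ↦ by
  rw [← M.mem_flats.1 hF, mem_closure]
  exact M.r_insert_eq_of_subset h (M.mem_closure.1 he)

theorem closure_mem_flats (X : Finset α) : M.closure X ∈ M.flats := by
  refine M.mem_flats.2 (subset_antisymm (fun e he ↦ ?_) (M.subset_closure _))
  have hle := M.r_mono (insert_subset_insert e (M.subset_closure X))
  rw [mem_closure, r_closure] at he
  exact M.mem_closure.2 ((hle.trans_eq he).antisymm (M.r_le_insert X e))

theorem closure_eq (hF : F ∈ M.flats) (h : X ⊆ F) (hr : M.r F ≤ M.r X) : M.closure X = F := by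
  refine (M.closure_subset hF h).antisymm fun e he ↦ ?_
  have := M.r_mono (insert_subset he h)
  exact M.mem_closure.2 ((this.trans hr).antisymm (M.r_le_insert X e))

theorem closure_insert_of_mem (h : e ∈ M.closure X) : M.closure (insert e X) = M.closure X :=
  M.closure_eq (M.closure_mem_flats X) (insert_subset h (M.subset_closure X))
    ((M.r_closure X).trans_le (M.r_le_insert X e))

theorem r_insert_of_mem_flats (hF : F ∈ M.flats) (he : e ∉ F) : M.r (insert e F) = M.r F + 1 :=
  M.r_insert_of_notMem_closure (by rwa [M.mem_flats.1 hF])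

/-- The flats of a matroid as a graded family, with the closure of `∅` at the bottom. -/
def flatFamily : FlatFamily α where
  flats := M.flats
  rk G := M.r G.1
  rk_strictMono := fun A B h ↦ by
    obtain ⟨i, hB, hA⟩ := exists_of_ssubset h
    exact Nat.lt_of_succ_le <| (M.r_insert_of_mem_flats A.2 hA).ge.trans
      (M.r_mono (insert_subset hB h.le))
  exists_cover := fun A B h i hB hA ↦ by
    have hsub := M.subset_closure (insert i A.1)
    refine ⟨⟨M.closure (insert i A.1), M.closure_mem_flats _⟩,
      (ssubset_insert hA).trans_subset hsub, M.closure_subset B.2 (insert_subset hB h.le),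
      hsub (mem_insert_self i A.1), ?_⟩
    rw [r_closure, M.r_insert_of_mem_flats A.2 hA]
  cover_unique := fun A G H hG hH hGrk hHrk i hiG hiH hA ↦ by
    have hrk := M.r_insert_of_mem_flats A.2 hA
    ext1
    rw [← M.closure_eq G.2 (insert_subset hiG hG.le) (by omega),
      ← M.closure_eq H.2 (insert_subset hiH hH.le) (by omega)]

theorem flatFamily_rk (G : M.flatFamily.Flat) : M.flatFamily.rk G = M.r G.1 := rfl

instance : OrderBot M.flatFamily.Flat where
  bot := ⟨M.closure ∅, M.closure_mem_flats ∅⟩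
  bot_le G := M.closure_subset G.2 (empty_subset _)

instance : OrderTop M.flatFamily.Flat where
  top := ⟨univ, M.mem_flats.2 (univ_subset_iff.1 (M.subset_closure univ))⟩
  le_top G := subset_univ G.1

variable {M} in
theorem IsLoopless.coe_bot (hM : M.IsLoopless) : (⊥ : M.flatFamily.Flat).1 = ∅ := by
  refine eq_empty_of_forall_notMem fun e he ↦ ?_
  have hr := M.mem_closure.1 he
  rw [insert_empty_eq, hM e, M.r_empty] at hr
  omega

/-- The closure of a set, as a member of the family of flats. -/
def closureFlat (X : Finset α) : M.flatFamily.Flat := ⟨M.closure X, M.closure_mem_flats X⟩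

variable {M} {B : M.flatFamily.Flat} {i : α}

/-- The unsigned Möbius number `|μ(⊥, G)|` of the lattice of flats, by Rota's cross-cut formula. -/
noncomputable def moebius (G : M.flatFamily.Flat) : ℝ :=
  (-1) ^ M.r G.1 * ∑ X : Finset α with M.closureFlat X = G, (-1) ^ #X

theorem IsLoopless.moebius_bot (hM : M.IsLoopless) : moebius (⊥ : M.flatFamily.Flat) = 1 := by
  have hfilter : ({X | M.closureFlat X = ⊥} : Finset (Finset α)) = {∅} := by
    ext X
    simp only [mem_filter_univ, mem_singleton]
    refine ⟨fun h ↦ ?_, fun h ↦ h ▸ rfl⟩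
    rw [← subset_empty, ← hM.coe_bot, ← h]
    exact M.subset_closure X
  rw [moebius, hfilter, hM.coe_bot, M.r_empty]
  simp

theorem moebius_eq_neg_sum (hi : i ∈ B.1) : moebius B = -((-1) ^ M.r B.1 *
    ∑ X : Finset α with M.closureFlat (insert i X) = B ∧ i ∉ M.closure X, (-1) ^ #X) := by
  have hzero := sum_neg_one_pow_card_mul_insert i fun X ↦ if M.closureFlat X = B then 1 else 0
  simp only [mul_ite, mul_one, mul_zero] at hzero
  rw [moebius, ← mul_neg, sum_filter, sum_filter]
  congr 1
  rw [eq_neg_iff_add_eq_zero, ← sum_add_distrib]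
  refine (sum_congr rfl fun X _ ↦ ?_).trans hzero
  by_cases h : i ∈ M.closure X
  · have : M.closureFlat (insert i X) = M.closureFlat X :=
      Subtype.ext (M.closure_insert_of_mem h)
    simp [h, this]
  · have : M.closureFlat X ≠ B := fun hX ↦ h (by rwa [← hX] at hi)
    simp [h, this]

theorem closureFlat_insert_eq_iff (hi : i ∈ B.1) (hX : i ∉ M.closure X) :
    M.closureFlat (insert i X) = B ↔ M.closureFlat X < B ∧ M.r X + 1 = M.r B.1 := by
  have hr := M.r_insert_of_notMem_closure hX
  constructor
  · rintro rfl
    refine ⟨lt_of_le_of_ne ?_ fun h ↦ hX (by rwa [← h] at hi), ?_⟩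
    · exact M.closure_subset (M.closure_mem_flats _)
        ((subset_insert i X).trans (M.subset_closure _))
    · exact (M.r_closure _).trans hr |>.symm
  · rintro ⟨hlt, hrB⟩
    exact Subtype.ext <| M.closure_eq B.2
      (insert_subset hi ((M.subset_closure X).trans hlt.le)) (by omega)

theorem moebius_eq_sum (hi : i ∈ B.1) :
    moebius B = ∑ G with G < B ∧ M.r G.1 + 1 = M.r B.1 ∧ i ∉ G.1, moebius G := by
  have hsign (G : M.flatFamily.Flat) (hG : M.r G.1 + 1 = M.r B.1) : moebius G =
      -((-1) ^ M.r B.1 * ∑ X : Finset α with M.closureFlat X = G, (-1 : ℝ) ^ #X) := by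
    rw [moebius, ← hG, pow_succ]
    ring
  rw [sum_congr rfl fun G hG ↦ hsign G (mem_filter.1 hG).2.2.1, sum_neg_distrib, ← mul_sum,
    moebius_eq_neg_sum hi, sum_fiberwise_eq_sum_filter]
  congr 3
  ext X
  rw [mem_filter_univ, mem_filter_univ, mem_filter_univ]
  change _ ↔ M.closureFlat X < B ∧ M.r (M.closure X) + 1 = M.r B.1 ∧ i ∉ M.closure X
  rw [r_closure, ← and_assoc]
  exact and_congr_left fun hX ↦ closureFlat_insert_eq_iff hi hX

theorem IsLoopless.isMoebius (hM : M.IsLoopless) :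
    FlatFamily.IsMoebius (moebius : M.flatFamily.Flat → ℝ) :=
  ⟨hM.moebius_bot, fun _ _ hi _ ↦ moebius_eq_sum hi⟩

variable (M) in
/-- The unsigned coefficients of the characteristic polynomial of `M` divided by `t - 1`, i.e. the
unsigned Whitney numbers of the affine matroid obtained from `M` by removing the hyperplane at
infinity `p`. -/
noncomputable def affineWhitney (p : α) (k : ℕ) : ℝ :=
  (-1) ^ k * ∑ X : Finset α with M.r X = k ∧ M.r (insert p X) = k + 1, (-1) ^ #X

theorem sum_moebius (p : α) (k : ℕ) :
    ∑ G : M.flatFamily.Flat with M.r G.1 = k + 1 ∧ p ∈ G.1, moebius G = M.affineWhitney p k := by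
  have hsign (G : M.flatFamily.Flat) (hr : M.r G.1 = k + 1) (hp : p ∈ G.1) :
      moebius G = (-1) ^ k *
        ∑ X with p ∉ M.closure X ∧ M.closureFlat (insert p X) = G, (-1 : ℝ) ^ #X := by
    simp only [moebius_eq_neg_sum hp, hr, pow_succ, and_comm]
    ring
  rw [sum_congr rfl fun G hG ↦ (mem_filter.1 hG).2.elim (hsign G), ← mul_sum, affineWhitney]
  simp only [← filter_filter]
  rw [sum_fiberwise_eq_sum_filter, filter_filter]
  congr 2
  ext X
  simp only [mem_filter, mem_univ, true_and, closureFlat, r_closure, ← r_insert_eq_add_one_iff,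
    M.subset_closure _ (mem_insert_self p X), and_true]
  omega

theorem moebius_top (p : α) {k : ℕ} (hr : M.r univ = k + 1) :
    moebius (⊤ : M.flatFamily.Flat) = M.affineWhitney p k := by
  rw [← sum_moebius, sum_eq_single ⊤]
  · intro G hG hne
    have hlt := M.flatFamily.rk_strictMono (lt_top_iff_ne_top.2 hne)
    exact (hlt.ne ((mem_filter.1 hG).2.1.trans hr.symm)).elim
  · exact fun h ↦ (h <| mem_filter.2 ⟨mem_univ _, hr, mem_univ p⟩).elim

theorem IsLoopless.sum_moebius_Ioo (hM : M.IsLoopless) (p : α) {j k : ℕ} (hj : j ≠ 0)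
    (hr : M.r univ = k + 1 + j) :
    ∑ G ∈ Ioo (⊥ : M.flatFamily.Flat) ⊤ with
      M.flatFamily.rk G + j = M.flatFamily.rk ⊤ ∧ p ∈ G.1, moebius G = M.affineWhitney p k := by
  rw [← sum_moebius]
  congr 1
  ext G
  have htop : M.flatFamily.rk ⊤ = M.r univ := rfl
  simp only [mem_filter, mem_Ioo, mem_univ, true_and, M.flatFamily_rk G, htop, hr]
  refine ⟨fun h ↦ ⟨by omega, h.2.2⟩, fun h ↦ ⟨⟨bot_lt_iff_ne_bot.2 ?_, lt_top_iff_ne_top.2 ?_⟩,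
    by omega, h.2⟩⟩
  · rintro rfl
    simpa [hM.coe_bot] using h.2
  · rintro rfl
    have := h.1.symm.trans hr
    omega

theorem IsLoopless.affineWhitney_mul_le_sq_of_r_univ (hM : M.IsLoopless) (p : α) {n : ℕ}
    (hr : M.r univ = n + 3) :
    M.affineWhitney p n * M.affineWhitney p (n + 2) ≤ M.affineWhitney p (n + 1) ^ 2 := by
  have hbot : p ∉ (⊥ : M.flatFamily.Flat).1 := by simp [hM.coe_bot]
  have hrk : M.flatFamily.rk ⊤ = M.flatFamily.rk ⊥ + n + 3 := by
    rw [M.flatFamily_rk ⊥, hM.coe_bot, M.r_empty, zero_add]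
    exact hr
  have h := hM.isMoebius.sum_mul_le_sq (mem_univ p) hbot hrk
  rwa [hM.sum_moebius_Ioo p two_ne_zero hr, hM.sum_moebius_Ioo p one_ne_zero hr,
    moebius_top p hr] at h

theorem IsLoopless.affineWhitney_mul_le_sq (hM : M.IsLoopless) (p : α) {n : ℕ}
    (hr : n + 3 ≤ M.r univ) :
    M.affineWhitney p n * M.affineWhitney p (n + 2) ≤ M.affineWhitney p (n + 1) ^ 2 := by
  have htrunc (k : ℕ) (hk : k ≤ n + 2) :
      (M.trunc (n + 3)).affineWhitney p k = M.affineWhitney p k := by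
    rw [affineWhitney, affineWhitney]
    congr 2
    ext X
    have := M.r_insert_le X p
    simp only [mem_filter_univ, trunc_r]
    omega
  rw [← htrunc n (by omega), ← htrunc (n + 1) (by omega), ← htrunc (n + 2) le_rfl]
  exact (hM.trunc (by omega)).affineWhitney_mul_le_sq_of_r_univ p (min_eq_right hr)

end RankFunction

/-! ### The cone over a semimatroid -/

namespace Semimatroid

open Finset

section MatroidRank

variable {E : Type*} [DecidableEq E] [Fintype E] (S : Semimatroid E) {X Y : Finset E} {e f : E}

theorem empty_mem : ∅ ∈ S.C := by
  obtain ⟨X, hX⟩ := S.C_nonempty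
  exact S.mem_of_subset hX (empty_subset X)

theorem r_empty : S.r ∅ = 0 := Nat.le_zero.1 (S.r_le_card S.empty_mem)

theorem r_insert_le (h : insert e X ∈ S.C) : S.r (insert e X) ≤ S.r X + 1 := by
  have he : {e} ∈ S.C := S.mem_of_subset h (singleton_subset_iff.2 (mem_insert_self e X))
  have hle := S.r_le_card he
  have hsub := S.submodular he (S.mem_of_subset h (subset_insert e X)) h
  rw [card_singleton] at hle
  rw [← insert_eq] at hsub
  omega

theorem insert_insert_mem (he : insert e X ∈ S.C) (hf : insert f X ∈ S.C)
    (hr : S.r (insert e X) = S.r X) : insert e (insert f X) ∈ S.C := by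
  have hX : X ∈ S.C := S.mem_of_subset he (subset_insert e X)
  have hinter : insert e X ∩ insert f X ∈ S.C := S.mem_of_subset he inter_subset_left
  have hle := S.r_mono hX hinter (subset_inter (subset_insert e X) (subset_insert f X))
  have hge := S.r_mono hinter he inter_subset_left
  have hunion := S.union_mem he hf (by omega)
  rwa [insert_union, union_eq_right.2 (subset_insert f X)] at hunion

/-- The rank function of the matroid underlying a semimatroid, extending the rank from the central
sets to all sets. -/
def matroidRank (X : Finset E) : ℕ := (S.C.filter (· ⊆ X)).sup S.r

theorem le_matroidRank (hY : Y ∈ S.C) (h : Y ⊆ X) : S.r Y ≤ S.matroidRank X :=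
  le_sup (f := S.r) (mem_filter.2 ⟨hY, h⟩)

theorem exists_r_eq_matroidRank (X : Finset E) : ∃ Y ∈ S.C, Y ⊆ X ∧ S.r Y = S.matroidRank X := by
  obtain ⟨Y, hY, h⟩ := exists_mem_eq_sup (S.C.filter (· ⊆ X))
    ⟨∅, mem_filter.2 ⟨S.empty_mem, empty_subset X⟩⟩ S.r
  exact ⟨Y, (mem_filter.1 hY).1, (mem_filter.1 hY).2, h.symm⟩

theorem matroidRank_mono : Monotone S.matroidRank := fun _ _ h ↦
  sup_mono <| monotone_filter_right _ fun _ _ hZ ↦ hZ.trans h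

theorem matroidRank_eq_of_maximal (hY : Y ∈ S.C) (h : Y ⊆ X)
    (hmax : ∀ e ∈ X, insert e Y ∈ S.C → e ∈ Y) : S.matroidRank X = S.r Y := by
  refine le_antisymm (le_of_not_gt fun hlt ↦ ?_) (S.le_matroidRank hY h)
  obtain ⟨Z, hZ, hZX, hZr⟩ := S.exists_r_eq_matroidRank X
  obtain ⟨e, he, hins⟩ := S.augment hY hZ (hZr ▸ hlt)
  rw [mem_sdiff] at he
  exact he.2 (hmax e (hZX he.1) hins)

theorem matroidRank_of_mem (h : X ∈ S.C) : S.matroidRank X = S.r X :=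
  S.matroidRank_eq_of_maximal h subset_rfl fun _ he _ ↦ he

theorem exists_superset_r_eq_matroidRank (hY : Y ∈ S.C) (h : Y ⊆ X) :
    ∃ Z ∈ S.C, Y ⊆ Z ∧ Z ⊆ X ∧ S.r Z = S.matroidRank X := by
  obtain ⟨Z, hZ, hmax⟩ := exists_max_image (S.C.filter fun Z ↦ Y ⊆ Z ∧ Z ⊆ X) card
    ⟨Y, mem_filter.2 ⟨hY, subset_rfl, h⟩⟩
  obtain ⟨hZC, hYZ, hZX⟩ := mem_filter.1 hZ
  refine ⟨Z, hZC, hYZ, hZX, (S.matroidRank_eq_of_maximal hZC hZX fun e he hins ↦ ?_).symm⟩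
  by_contra hnot
  have hcard := hmax (insert e Z) (mem_filter.2
    ⟨hins, hYZ.trans (subset_insert e Z), insert_subset he hZX⟩)
  rw [card_insert_of_notMem hnot] at hcard
  omega

theorem matroidRank_insert_le (X : Finset E) (e : E) :
    S.matroidRank (insert e X) ≤ S.matroidRank X + 1 := by
  obtain ⟨Z, hZ, hZX, hZr⟩ := S.exists_r_eq_matroidRank (insert e X)
  have hle := S.le_matroidRank (S.mem_of_subset hZ (erase_subset e Z)) (subset_insert_iff.1 hZX)
  rw [← hZr]
  by_cases he : e ∈ Z
  · have hins := S.r_insert_le (X := Z.erase e) (e := e) (by rwa [insert_erase he])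
    rw [insert_erase he] at hins
    omega
  · rw [erase_eq_of_notMem he] at hle
    omega

theorem matroidRank_insert_insert (he : S.matroidRank (insert e X) = S.matroidRank X)
    (hf : S.matroidRank (insert f X) = S.matroidRank X) :
    S.matroidRank (insert e (insert f X)) = S.matroidRank X := by
  have hsub : X ⊆ insert e (insert f X) := (subset_insert f X).trans (subset_insert e _)
  refine (S.matroidRank_mono hsub).antisymm' ?_
  obtain ⟨Y, hY, hYX, hYr⟩ := S.exists_r_eq_matroidRank X
  obtain ⟨Z, hZ, hYZ, hZX, hZr⟩ := S.exists_superset_r_eq_matroidRank hY (hYX.trans hsub)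
  have hZe : Z ∩ insert e X ∈ S.C := S.mem_of_subset hZ inter_subset_left
  have hZf : Z ∩ insert f X ∈ S.C := S.mem_of_subset hZ inter_subset_left
  have hunion : Z ∩ insert e X ∪ Z ∩ insert f X = Z := by
    rw [← inter_union_distrib_left, insert_union, union_eq_right.2 (subset_insert f X),
      inter_eq_left.2 hZX]
  have hsubmod := S.submodular hZe hZf (by rwa [hunion])
  have hler := S.r_mono hY (S.mem_of_subset hZe inter_subset_left)
    (subset_inter (subset_inter hYZ (hYX.trans (subset_insert e X)))
      (subset_inter hYZ (hYX.trans (subset_insert f X))))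
  have hlee := S.le_matroidRank hZe inter_subset_right
  have hlef := S.le_matroidRank hZf inter_subset_right
  rw [hunion] at hsubmod
  omega

theorem matroidRank_insert_of_insert_notMem {A : Finset E} {a : E} (hA : A ∈ S.C)
    (ha : insert a A ∉ S.C) : S.matroidRank (insert a A) = S.r A := by
  refine S.matroidRank_eq_of_maximal hA (subset_insert a A) fun b hb hins ↦ ?_
  exact (mem_insert.1 hb).resolve_left fun hba ↦ ha (hba ▸ hins)

end MatroidRank

section Option

variable {E : Type*} [DecidableEq E] {X : Finset (Option E)}

theorem eraseNone_insert_none (X : Finset (Option E)) :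
    eraseNone (insert none X) = eraseNone X := by
  ext
  simp

theorem eraseNone_insert_some (X : Finset (Option E)) (a : E) :
    eraseNone (insert (some a) X) = insert a (eraseNone X) := by
  ext
  simp

theorem eraseNone_subset_insert (X : Finset (Option E)) (e : Option E) :
    eraseNone X ⊆ eraseNone (insert e X) := eraseNone.monotone (subset_insert e X)

end Option

variable {E : Type*} [DecidableEq E] [Fintype E] (S : Semimatroid E) {X : Finset (Option E)}
  {e f : Option E}

/-- A set of points of the cone over `S` is affine if it avoids the hyperplane at infinity `none`
and is central in `S`. -/
def IsAffine (X : Finset (Option E)) : Prop := none ∉ X ∧ eraseNone X ∈ S.C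

instance : DecidablePred S.IsAffine := fun _ ↦ inferInstanceAs (Decidable (_ ∧ _))

variable {S} in
theorem IsAffine.subset {Y : Finset (Option E)} (hY : S.IsAffine Y) (h : X ⊆ Y) : S.IsAffine X :=
  ⟨fun hX ↦ hY.1 (h hX), S.mem_of_subset hY.2 (eraseNone.monotone h)⟩

theorem not_isAffine_insert_none (X : Finset (Option E)) : ¬ S.IsAffine (insert none X) :=
  fun h ↦ h.1 (mem_insert_self none X)

theorem isAffine_insert_some {a : E} (hX : S.IsAffine X) :
    S.IsAffine (insert (some a) X) ↔ insert a (eraseNone X) ∈ S.C := by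
  simp [IsAffine, eraseNone_insert_some, hX.1]

/-- The rank function of the cone over a semimatroid: a matroid with one extra element `none`, the
hyperplane at infinity, which lies in the closure of every set that is not central. -/
def coneRank (X : Finset (Option E)) : ℕ :=
  S.matroidRank (eraseNone X) + if S.IsAffine X then 0 else 1

theorem coneRank_of_isAffine (hX : S.IsAffine X) : S.coneRank X = S.r (eraseNone X) := by
  rw [coneRank, if_pos hX, S.matroidRank_of_mem hX.2, add_zero]

theorem coneRank_of_not_isAffine (hX : ¬ S.IsAffine X) :
    S.coneRank X = S.matroidRank (eraseNone X) + 1 := by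
  rw [coneRank, if_neg hX]

theorem coneRank_empty : S.coneRank ∅ = 0 := by
  rw [S.coneRank_of_isAffine ⟨notMem_empty _, by simpa using S.empty_mem⟩, eraseNone_empty,
    S.r_empty]

theorem coneRank_insert_none (X : Finset (Option E)) :
    S.coneRank (insert none X) = S.matroidRank (eraseNone X) + 1 := by
  rw [S.coneRank_of_not_isAffine (S.not_isAffine_insert_none X), eraseNone_insert_none]

theorem coneRank_le_insert (X : Finset (Option E)) (e : Option E) :
    S.coneRank X ≤ S.coneRank (insert e X) := by
  have hle := S.matroidRank_mono (eraseNone_subset_insert X e)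
  have haff : S.IsAffine (insert e X) → S.IsAffine X := fun h ↦ h.subset (subset_insert e X)
  unfold coneRank
  split_ifs <;> first | omega | tauto

theorem coneRank_insert_eq_iff : S.coneRank (insert e X) = S.coneRank X ↔
    S.matroidRank (eraseNone (insert e X)) = S.matroidRank (eraseNone X) ∧
      (S.IsAffine X → S.IsAffine (insert e X)) := by
  have hle := S.matroidRank_mono (eraseNone_subset_insert X e)
  have haff : S.IsAffine (insert e X) → S.IsAffine X := fun h ↦ h.subset (subset_insert e X)
  unfold coneRank
  split_ifs <;> grind

theorem coneRank_insert_le (X : Finset (Option E)) (e : Option E) :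
    S.coneRank (insert e X) ≤ S.coneRank X + 1 := by
  cases e with
  | none =>
    rw [coneRank_insert_none, coneRank]
    omega
  | some a =>
    have hrank := S.matroidRank_insert_le (eraseNone X) a
    rw [← eraseNone_insert_some] at hrank
    by_cases hX : S.IsAffine X
    · by_cases hins : S.IsAffine (insert (some a) X)
      · rwa [coneRank, coneRank, if_pos hX, if_pos hins]
      · rw [S.coneRank_of_not_isAffine hins, S.coneRank_of_isAffine hX, eraseNone_insert_some,
          S.matroidRank_insert_of_insert_notMem hX.2 (mt (S.isAffine_insert_some hX).2 hins)]
    · have hins : ¬ S.IsAffine (insert (some a) X) := fun h ↦ hX (h.subset (subset_insert _ _))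
      rw [S.coneRank_of_not_isAffine hins, S.coneRank_of_not_isAffine hX]
      omega

theorem matroidRank_eraseNone_insert_insert
    (he : S.matroidRank (eraseNone (insert e X)) = S.matroidRank (eraseNone X))
    (hf : S.matroidRank (eraseNone (insert f X)) = S.matroidRank (eraseNone X)) :
    S.matroidRank (eraseNone (insert e (insert f X))) = S.matroidRank (eraseNone X) := by
  cases e with
  | none => rwa [eraseNone_insert_none]
  | some a =>
    cases f with
    | none => rwa [eraseNone_insert_some, eraseNone_insert_none, ← eraseNone_insert_some]
    | some b =>
      simp only [eraseNone_insert_some] at he hf ⊢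
      exact S.matroidRank_insert_insert he hf

variable {S} in
theorem IsAffine.insert_insert (he : S.IsAffine (insert e X)) (hf : S.IsAffine (insert f X))
    (hr : S.coneRank (insert e X) = S.coneRank X) : S.IsAffine (insert e (insert f X)) := by
  have hX : S.IsAffine X := he.subset (subset_insert e X)
  rw [S.coneRank_of_isAffine he, S.coneRank_of_isAffine hX] at hr
  cases e with
  | none => exact (S.not_isAffine_insert_none X he).elim
  | some a =>
    cases f with
    | none => exact (S.not_isAffine_insert_none X hf).elim
    | some b =>
      rw [eraseNone_insert_some] at hr
      rw [S.isAffine_insert_some hf, eraseNone_insert_some]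
      exact S.insert_insert_mem ((S.isAffine_insert_some hX).1 he)
        ((S.isAffine_insert_some hX).1 hf) hr

theorem coneRank_insert_insert (he : S.coneRank (insert e X) = S.coneRank X)
    (hf : S.coneRank (insert f X) = S.coneRank X) :
    S.coneRank (insert e (insert f X)) = S.coneRank X := by
  have ⟨hrke, haffe⟩ := S.coneRank_insert_eq_iff.1 he
  have hrkf := (S.coneRank_insert_eq_iff.1 hf).1
  rw [← hf, coneRank_insert_eq_iff, hrkf]
  refine ⟨S.matroidRank_eraseNone_insert_insert hrke hrkf, fun h ↦ ?_⟩
  exact IsAffine.insert_insert (haffe (h.subset (subset_insert f X))) h he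

/-- The cone over a semimatroid. -/
@[simps] def cone : RankFunction (Option E) where
  r := S.coneRank
  r_empty := S.coneRank_empty
  r_le_insert := S.coneRank_le_insert
  r_insert_le := S.coneRank_insert_le
  r_insert_insert _ _ _ := S.coneRank_insert_insert

theorem isLoopless_cone (hS : ¬ ∃ e : E, {e} ∈ S.C ∧ S.r {e} = 0) : S.cone.IsLoopless := by
  intro e
  change S.coneRank {e} = 1
  refine ((S.coneRank_insert_le ∅ e).trans_eq (by rw [S.coneRank_empty])).antisymm ?_
  rw [insert_empty_eq]
  by_cases he : S.IsAffine {e}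
  · cases e with
    | none => exact (he.1 (mem_singleton_self none)).elim
    | some a =>
      have hsingle : eraseNone {some a} = {a} := eraseNone_map_some {a}
      have hmem := hsingle ▸ he.2
      rw [S.coneRank_of_isAffine he, hsingle, Nat.one_le_iff_ne_zero]
      exact fun hr ↦ hS ⟨a, hmem, hr⟩
  · rw [S.coneRank_of_not_isAffine he]
    omega

theorem coneRank_univ : S.coneRank univ = S.rank + 1 := by
  have huniv : eraseNone (univ : Finset (Option E)) = univ := by ext; simp
  rw [S.coneRank_of_not_isAffine fun h ↦ h.1 (mem_univ none), huniv, matroidRank, rank]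
  simp

theorem coneRank_eq_and_insert_none_eq_iff {k : ℕ} :
    S.coneRank X = k ∧ S.coneRank (insert none X) = k + 1 ↔
      S.IsAffine X ∧ S.r (eraseNone X) = k := by
  rw [coneRank_insert_none]
  by_cases hX : S.IsAffine X
  · simp [hX, S.coneRank_of_isAffine hX, S.matroidRank_of_mem hX.2]
  · rw [S.coneRank_of_not_isAffine hX]
    simp only [hX, false_and, iff_false]
    omega

theorem affineWhitney_cone (k : ℕ) : S.cone.affineWhitney none k =
    (-1) ^ k * ∑ A ∈ S.C with S.r A = k, (-1 : ℝ) ^ #A := by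
  have hfilter : ({X | S.cone.r X = k ∧ S.cone.r (insert none X) = k + 1} :
      Finset (Finset (Option E))) =
      (S.C.filter (S.r · = k)).map (mapEmbedding Function.Embedding.some).toEmbedding := by
    ext X
    rw [mem_filter_univ, cone_r, cone_r, coneRank_eq_and_insert_none_eq_iff]
    simp only [mem_map, mem_filter]
    constructor
    · rintro ⟨hX, hr⟩
      exact ⟨_, ⟨hX.2, hr⟩, (map_some_eraseNone X).trans (erase_eq_of_notMem hX.1)⟩
    · rintro ⟨A, ⟨hA, hr⟩, rfl⟩
      simpa [IsAffine, hA] using hr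
  rw [RankFunction.affineWhitney, hfilter, sum_map]
  simp

theorem whitney_eq {k : ℕ} (hk : k ≤ S.rank) :
    S.whitney k = (-1) ^ k * ∑ A ∈ S.C with S.r A = k, (-1 : ℤ) ^ #A := by
  rw [whitney, charPoly, Polynomial.finsetSum_coeff, sum_filter]
  congr 1
  refine sum_congr rfl fun A hA ↦ ?_
  have hle : S.r A ≤ S.rank := le_sup (f := S.r) hA
  have hconst : (-1 : Polynomial ℤ) ^ #A = Polynomial.C ((-1) ^ #A) := by simp
  have hiff : S.rank - k = S.rank - S.r A ↔ S.r A = k := by omega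
  simp only [hconst, Polynomial.coeff_C_mul, Polynomial.coeff_X_pow, mul_ite, mul_one, mul_zero,
    hiff]

theorem cast_whitney {k : ℕ} (hk : k ≤ S.rank) :
    (S.whitney k : ℝ) = S.cone.affineWhitney none k := by
  rw [S.whitney_eq hk, S.affineWhitney_cone]
  push_cast
  rfl

end Semimatroid

/-- For a loopless semimatroid, the sequence `w_0(𝒞), …, w_{r(𝒞)}(𝒞)` of
unsigned Whitney numbers of the first kind is log-concave:
`w_{k−1}(𝒞) ⋅ w_{k+1}(𝒞) ≤ w_k(𝒞)²` for all `1 ≤ k ≤ r(𝒞) − 1`. -/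
theorem Semimatroid.whitney_log_concave
    {E : Type*} [DecidableEq E] [Fintype E] (S : Semimatroid E)
    (hloopless : ¬ ∃ e : E, {e} ∈ S.C ∧ S.r {e} = 0) :
    ∀ k : ℕ, 1 ≤ k → k + 1 ≤ S.rank →
      S.whitney (k - 1) * S.whitney (k + 1) ≤ S.whitney k ^ 2 := by
  intro k hk hkr
  obtain ⟨n, rfl⟩ := Nat.exists_eq_add_of_le' hk
  have hr : n + 3 ≤ S.cone.r Finset.univ := by rw [cone_r, coneRank_univ]; omega
  have h := (S.isLoopless_cone hloopless).affineWhitney_mul_le_sq none hr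
  rw [← S.cast_whitney (by omega), ← S.cast_whitney (by omega), ← S.cast_whitney (by omega)] at h
  exact_mod_cast h
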